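/- arXiv:1902.05438 — 5 statements merged into one kernel-verified Lean document; each statement's English description precedes it below -/
import Mathlib

section
/- If f : ℝ⁸ → ℂ is a radial Schwartz function such that f(√(2n)) = 0, f′(√(2n)) = 0, f̂(√(2n)) = 0, and f̂′(√(2n)) = 0 for every integer n ≥ 1, then f is identically zero. -/
noncomputable section

/-- A function on `ℝ⁸` is radial if its value depends only on the norm of the argument. -/
def IsRadial (f : EuclideanSpace ℝ (Fin 8) → ℂ) : Prop :=
  ∀ x y : EuclideanSpace ℝ (Fin 8), ‖x‖ = ‖y‖ → f x = f y

/-- The first standard basis vector of `ℝ⁸`. -/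
def e₁ : EuclideanSpace ℝ (Fin 8) := EuclideanSpace.single 0 1

/-- The radial value `f(r) = f(r·e₁)` of a Schwartz function. -/
def radVal (f : SchwartzMap (EuclideanSpace ℝ (Fin 8)) ℂ) (r : ℝ) : ℂ := f (r • e₁)

/-- The radial derivative `f′(r)`, the derivative at `t = r` of `t ↦ f(t·e₁)`. -/
def radDeriv (f : SchwartzMap (EuclideanSpace ℝ (Fin 8)) ℂ) (r : ℝ) : ℂ :=
  deriv (fun t : ℝ => f (t • e₁)) r

/-- The Fourier transform `f̂(y) = ∫ f(x) e^{-2πi⟨x,y⟩} dx` of a Schwartz function. -/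
def FT (f : SchwartzMap (EuclideanSpace ℝ (Fin 8)) ℂ) :
    SchwartzMap (EuclideanSpace ℝ (Fin 8)) ℂ :=
  SchwartzMap.fourierTransformCLM ℂ f

/-!
Put `F(t) = ∫ f(x) exp (π i t |x|²) dx` for real `t`, and define `F̃` in the same way from `f̂`.
The function `F` is the inverse Fourier transform of the density of `f(x) dx` under
`x ↦ |x|² / 2`, so by Poisson summation the vanishing of `f(√(2n))` and `f′(√(2n))` gives
`∑ F(t + n) = 0` and `∑ n F(t + n) = 0` for all `t`; the same holds for `F̃`. Since the Fourier
transform of the Gaussian relates `F(-1/t)` to `F̃(t)` by a factor of modulus `t⁴`, the function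
`g = (F, F̃)` satisfies `‖g(-1/t)‖ = t⁴ ‖g(t)‖`.

For `0 ≤ t ≤ 1`, the triangle inequality in `∑ (n + 1) g(t + n) = 0` and in `∑ n g(t + n) = 0`,
taken with weights `t` and `1 - t`, gives
`2 (|t| ‖g(t)‖ + |t - 1| ‖g(t - 1)‖) ≤ ∑ |t + n| ‖g(t + n)‖`. Integrated over `[0, 1]` this reads
`2 ∫_{-1}^1 |x| ‖g(x)‖ dx ≤ ∫ |x| ‖g(x)‖ dx`. But `|x| ‖g(x)‖ dx` is invariant under `x ↦ -1/x`,
so both sides agree and both triangle inequalities are equalities. At `t = 0` and `t = 1` this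
forces `g(m) = 0` for `|m| ≥ 2`, and for `t` in `(0, 1)` it shows that `g(t) = 0` implies
`g(t + n) = 0` for all `n`. Combined with the behaviour of `g` under `t ↦ -1/t`, the Euclidean
algorithm shows that `g` vanishes at every non-integral rational. Hence `g = 0`, and so `f = 0`.
-/

section

open Set Filter Topology MeasureTheory Asymptotics TopologicalSpace
open scoped FourierTransform Interval

section Decay

variable {E : Type*} [NormedAddCommGroup E] {g : ℝ → E} {b : ℝ}

lemma isBigO_id_smul_rpow_neg [NormedSpace ℝ E] (hg : g =O[cocompact ℝ] fun x ↦ |x| ^ (-b)) :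
    (fun x ↦ x • g x) =O[cocompact ℝ] fun x ↦ |x| ^ (-(b - 1)) := by
  refine ((isBigO_refl (fun x : ℝ ↦ x) (cocompact ℝ)).smul hg).trans (IsBigO.of_bound' ?_)
  filter_upwards [(isCompact_singleton (x := (0 : ℝ))).compl_mem_cocompact] with x hx
  have hx : 0 < |x| := abs_pos.2 hx
  rw [neg_sub, sub_eq_neg_add, Real.rpow_add_one hx.ne', smul_eq_mul, norm_mul, norm_mul,
    Real.norm_eq_abs, Real.norm_eq_abs |x|, abs_abs, mul_comm]

lemma isBigO_rpow_neg_of_norm_comp_neg_inv {h : ℝ → E} (hh : ContinuousAt h 0)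
    (hinv : ∀ x ≠ 0, ‖h (-x⁻¹)‖ = |x| ^ b * ‖g x‖) : g =O[cocompact ℝ] fun x ↦ |x| ^ (-b) := by
  have hlim : Tendsto (fun x : ℝ ↦ -x⁻¹) (cocompact ℝ) (𝓝 0) := by
    rw [← Metric.cobounded_eq_cocompact, ← neg_zero]
    exact tendsto_inv₀_cobounded.neg
  have hbdd : (fun x : ℝ ↦ h (-x⁻¹)) =O[cocompact ℝ] fun _ ↦ (1 : ℝ) :=
    (hh.tendsto.comp hlim).isBigO_one ℝ
  obtain ⟨C, hC⟩ := hbdd.bound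
  refine IsBigO.of_bound C ?_
  filter_upwards [hC, (isCompact_singleton (x := (0 : ℝ))).compl_mem_cocompact] with x hx hx0
  have hpos : 0 < |x| ^ b := Real.rpow_pos_of_pos (abs_pos.2 hx0) b
  rwa [hinv x hx0, norm_one, mul_one, ← le_div_iff₀' hpos, div_eq_mul_inv,
    ← Real.rpow_neg (abs_nonneg x), ← Real.norm_of_nonneg (by positivity : 0 ≤ |x| ^ (-b))] at hx

lemma summable_norm_restrict_comp_add_int (hc : Continuous g) (hb : 1 < b)
    (hg : g =O[cocompact ℝ] fun x ↦ |x| ^ (-b)) (K : Compacts ℝ) :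
    Summable fun n : ℤ ↦ ‖(ContinuousMap.comp ⟨g, hc⟩ (.addRight (n : ℝ))).restrict K‖ :=
  summable_of_isBigO (Real.summable_abs_int_rpow hb)
    ((isBigO_norm_restrict_cocompact ⟨g, hc⟩ (zero_lt_one.trans hb) hg K).comp_tendsto
      Int.tendsto_coe_cofinite)

lemma exists_summable_norm_comp_add_int_le (hc : Continuous g) (hb : 1 < b)
    (hg : g =O[cocompact ℝ] fun x ↦ |x| ^ (-b)) (K : Compacts ℝ) :
    ∃ u : ℤ → ℝ, Summable u ∧ ∀ n : ℤ, ∀ t ∈ K, ‖g (t + n)‖ ≤ u n :=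
  ⟨_, summable_norm_restrict_comp_add_int hc hb hg K, fun n t ht ↦
    ((ContinuousMap.comp ⟨g, hc⟩ (.addRight (n : ℝ))).restrict (K : Set ℝ)).norm_coe_le_norm
      ⟨t, ht⟩⟩

lemma summable_norm_comp_add_int (hc : Continuous g) (hb : 1 < b)
    (hg : g =O[cocompact ℝ] fun x ↦ |x| ^ (-b)) (t : ℝ) : Summable fun n : ℤ ↦ ‖g (t + n)‖ :=
  let ⟨_, hu, hle⟩ := exists_summable_norm_comp_add_int_le hc hb hg ⟨{t}, isCompact_singleton⟩
  hu.of_nonneg_of_le (fun _ ↦ norm_nonneg _) fun n ↦ hle n t rfl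

lemma continuousOn_tsum_comp_add_int [CompleteSpace E] (hc : Continuous g) (hb : 1 < b)
    (hg : g =O[cocompact ℝ] fun x ↦ |x| ^ (-b)) (K : Compacts ℝ) :
    ContinuousOn (fun t ↦ ∑' n : ℤ, g (t + n)) K :=
  let ⟨_, hu, hle⟩ := exists_summable_norm_comp_add_int_le hc hb hg K
  continuousOn_tsum (fun _ ↦ by fun_prop) hu hle

lemma integrable_of_isBigO_rpow_neg [NormedSpace ℝ E] (hc : Continuous g) (hb : 1 < b)
    (hg : g =O[cocompact ℝ] fun x ↦ |x| ^ (-b)) : Integrable g :=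
  Real.integrable_of_summable_norm_Icc (f := ⟨g, hc⟩)
    (summable_norm_restrict_comp_add_int hc hb hg ⟨Icc 0 1, isCompact_Icc⟩)

lemma intervalIntegral_tsum_comp_add_int [NormedSpace ℝ E] [CompleteSpace E] (hc : Continuous g)
    (hb : 1 < b) (hg : g =O[cocompact ℝ] fun x ↦ |x| ^ (-b)) :
    ∫ t in (0 : ℝ)..1, ∑' n : ℤ, g (t + n) = ∫ x, g x := by
  have hsum := summable_norm_restrict_comp_add_int hc hb hg ⟨uIcc 0 1, isCompact_uIcc⟩
  exact (intervalIntegral.hasSum_intervalIntegral_of_summable_norm hsum).unique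
    (integrable_of_isBigO_rpow_neg hc hb hg).hasSum_intervalIntegral_comp_add_int

end Decay

section Poisson

variable {q : ℝ → ℂ} {b : ℝ}

lemma hasSum_comp_add_int_eq_zero (hc : Continuous q) (hb : 1 < b)
    (hq : q =O[cocompact ℝ] fun x ↦ |x| ^ (-b)) (hF : ∀ n : ℤ, 𝓕 q (n : ℝ) = 0) (t : ℝ) :
    HasSum (fun n : ℤ ↦ q (t + n)) 0 := by
  have hpoisson := Real.tsum_eq_tsum_fourier_of_rpow_decay_of_summable hc hb hq
    (by simpa only [hF] using summable_zero) t
  simp only [hF, zero_mul, tsum_zero] at hpoisson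
  exact hpoisson ▸ (summable_norm_comp_add_int hc hb hq t).of_norm.hasSum

lemma fourier_id_smul_eq_zero {w : ℝ} (hq : Integrable q) (hq' : Integrable fun x : ℝ ↦ x • q x)
    (hF : deriv (𝓕 q) w = 0) : 𝓕 (fun x : ℝ ↦ x • q x) w = 0 := by
  have hderiv := (Real.hasDerivAt_fourier hq hq' w).deriv
  have hconst : (fun x : ℝ ↦ (-2 * Real.pi * Complex.I * x) • q x)
      = (-2 * Real.pi * Complex.I : ℂ) • fun x : ℝ ↦ x • q x := by
    ext x
    simp [mul_assoc]
  have hsmul : (-2 * Real.pi * Complex.I : ℂ) • 𝓕 (fun x : ℝ ↦ x • q x) w = 0 := by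
    rw [← hF, hderiv, hconst]
    exact (congrFun (VectorFourier.fourierIntegral_const_smul ..) w).symm
  exact (smul_eq_zero.1 hsmul).resolve_left (by simp [Real.pi_ne_zero])

lemma hasSum_int_smul_comp_add_int_eq_zero (hc : Continuous q) (hb : 2 < b)
    (hq : q =O[cocompact ℝ] fun x ↦ |x| ^ (-b)) (hF : ∀ n : ℤ, 𝓕 q (n : ℝ) = 0)
    (hF' : ∀ n : ℤ, deriv (𝓕 q) (n : ℝ) = 0) (t : ℝ) :
    HasSum (fun n : ℤ ↦ (n : ℝ) • q (t + n)) 0 := by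
  have hc' : Continuous fun x : ℝ ↦ x • q x := by fun_prop
  have hb' : 1 < b - 1 := by linarith
  have hq' := isBigO_id_smul_rpow_neg hq
  have hmoment := hasSum_comp_add_int_eq_zero hc' hb' hq' (fun n : ℤ ↦ fourier_id_smul_eq_zero
    (integrable_of_isBigO_rpow_neg hc (by linarith) hq)
    (integrable_of_isBigO_rpow_neg hc' hb' hq') (hF' n)) t
  have hsum := hasSum_comp_add_int_eq_zero hc (by linarith) hq hF t
  simpa [add_smul] using hmoment.sub (hsum.const_smul t)

end Poisson

section Inversion

variable {E : Type*} [NormedAddCommGroup E] [NormedSpace ℝ E] {F : ℝ → E}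

lemma image_neg_inv_Icc_diff_zero : (fun x : ℝ ↦ -x⁻¹) '' (Icc (-1) 1 \ {0}) = (Ioo (-1) 1)ᶜ := by
  have hinv : Function.Involutive fun x : ℝ ↦ -x⁻¹ := fun x ↦ by simp
  rw [image_eq_preimage_of_inverse hinv.leftInverse hinv.rightInverse]
  ext x
  rcases eq_or_ne x 0 with rfl | hx
  · simp
  · simp only [preimage_sdiff, Set.mem_sdiff, mem_preimage, mem_Icc, ← abs_le, abs_neg, abs_inv,
      mem_singleton_iff, neg_eq_zero, inv_eq_zero, hx, not_false_eq_true, and_true, mem_compl_iff,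
      mem_Ioo, ← abs_lt, not_lt]
    exact inv_le_one_iff₀.trans (or_iff_right (abs_pos.2 hx).not_ge)

lemma setIntegral_compl_Ioo_of_comp_neg_inv (hF : ∀ x ≠ 0, F (-x⁻¹) = x ^ 2 • F x) :
    ∫ x in (Ioo (-1) 1)ᶜ, F x = ∫ x in (-1)..1, F x := by
  have hderiv : ∀ x ∈ Icc (-1 : ℝ) 1 \ {0},
      HasDerivWithinAt (fun x : ℝ ↦ -x⁻¹) (x ^ 2)⁻¹ (Icc (-1) 1 \ {0}) x := fun x hx ↦ by
    simpa only [neg_neg] using (hasDerivAt_inv hx.2).fun_neg.hasDerivWithinAt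
  have hinj : InjOn (fun x : ℝ ↦ -x⁻¹) (Icc (-1) 1 \ {0}) :=
    (neg_injective.comp inv_injective).injOn
  have hmeas : MeasurableSet (Icc (-1 : ℝ) 1 \ {0}) :=
    measurableSet_Icc.diff (measurableSet_singleton 0)
  have hnull : (Icc (-1 : ℝ) 1 \ {0} : Set ℝ) =ᵐ[volume] Icc (-1) 1 :=
    sdiff_null_ae_eq_self Real.volume_singleton
  rw [← image_neg_inv_Icc_diff_zero, integral_image_eq_integral_abs_deriv_smul hmeas hderiv hinj,
    intervalIntegral.integral_of_le (by norm_num), ← integral_Icc_eq_integral_Ioc,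
    ← setIntegral_congr_set hnull]
  refine setIntegral_congr_fun hmeas fun x hx ↦ ?_
  rw [hF x hx.2, abs_of_nonneg (by positivity), inv_smul_smul₀ (pow_ne_zero 2 hx.2)]

lemma integral_eq_two_smul_of_comp_neg_inv (hFi : Integrable F)
    (hF : ∀ x ≠ 0, F (-x⁻¹) = x ^ 2 • F x) : ∫ x, F x = (2 : ℝ) • ∫ x in (-1)..1, F x := by
  rw [← integral_add_compl measurableSet_Ioo hFi, setIntegral_compl_Ioo_of_comp_neg_inv hF,
    intervalIntegral.integral_of_le (by norm_num), integral_Ioc_eq_integral_Ioo, two_smul]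

end Inversion

section TranslateSums

lemma two_mul_norm_le_tsum_norm {ι E : Type*} [NormedAddCommGroup E] {u : ι → E}
    (hu : Summable fun i ↦ ‖u i‖) (h0 : HasSum u 0) (i : ι) : 2 * ‖u i‖ ≤ ∑' j, ‖u j‖ := by
  classical
  have hrest : HasSum (fun j ↦ if j = i then 0 else u j) (0 - u i) := hasSum_ite_sub_hasSum h0 i
  have hnorm : (fun j ↦ ‖if j = i then 0 else u j‖) = fun j ↦ if j = i then 0 else ‖u j‖ := by
    ext j
    split_ifs <;> simp
  have hsum : Summable fun j ↦ ‖if j = i then 0 else u j‖ :=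
    hnorm ▸ (hasSum_ite_sub_hasSum hu.hasSum i).summable
  calc 2 * ‖u i‖ = ‖u i‖ + ‖∑' j, if j = i then 0 else u j‖ := by
        rw [hrest.tsum_eq, zero_sub, norm_neg, two_mul]
    _ ≤ ‖u i‖ + ∑' j, if j = i then 0 else ‖u j‖ := by
        rw [← hnorm]
        gcongr
        exact norm_tsum_le_tsum_norm hsum
    _ = ∑' j, ‖u j‖ := (hu.tsum_eq_add_tsum_ite i).symm

variable {E : Type*} [NormedAddCommGroup E] [NormedSpace ℝ E] {g : ℝ → E} {b : ℝ} {t : ℝ}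

/-- The slack in the triangle inequality `‖g (t + c - 1)‖ ≤ ∑ ‖(n + c) • g (t + n)‖`, the sum being
over `n ≠ c - 1`, for functions satisfying `∑ (n + c) • g (t + n) = 0`; it is meant for `c = 0` and
`c = 1`, where the omitted coefficient `2 * c - 1` is a sign. -/
def excess (g : ℝ → E) (c : ℤ) (t : ℝ) : ℝ :=
  ∑' n : ℤ, ‖((n + c : ℤ) : ℝ) • g (t + n)‖ - 2 * ‖g (t + (c - 1 : ℤ))‖

lemma exists_summable_norm_int_smul_comp_add_int_le (hc : Continuous g) (hb : 2 < b)
    (hg : g =O[cocompact ℝ] fun x ↦ |x| ^ (-b)) (c : ℤ) :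
    ∃ u : ℤ → ℝ, Summable u ∧ ∀ n : ℤ, ∀ t ∈ Icc (0 : ℝ) 1,
      ‖((n + c : ℤ) : ℝ) • g (t + n)‖ ≤ u n := by
  obtain ⟨u, hu, hgu⟩ := exists_summable_norm_comp_add_int_le hc (by linarith) hg
    ⟨Icc 0 1, isCompact_Icc⟩
  obtain ⟨v, hv, hgv⟩ := exists_summable_norm_comp_add_int_le (g := fun x ↦ x • g x)
    (by fun_prop) (by linarith) (isBigO_id_smul_rpow_neg hg) ⟨Icc 0 1, isCompact_Icc⟩
  refine ⟨fun n ↦ v n + (|(c : ℝ)| + 1) * u n, hv.add (hu.mul_left _), fun n t ht ↦ ?_⟩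
  have hct : |(c : ℝ) - t| ≤ |(c : ℝ)| + 1 :=
    (abs_sub _ _).trans (by gcongr; rw [abs_of_nonneg ht.1]; exact ht.2)
  calc ‖((n + c : ℤ) : ℝ) • g (t + n)‖ = ‖(t + n) • g (t + n) + (c - t) • g (t + n)‖ := by
        rw [← add_smul]
        push_cast
        ring_nf
    _ ≤ ‖(t + n) • g (t + n)‖ + |c - t| * ‖g (t + n)‖ :=
        (norm_add_le _ _).trans_eq (by rw [norm_smul (c - t), Real.norm_eq_abs])
    _ ≤ v n + (|(c : ℝ)| + 1) * u n :=
        add_le_add (hgv n t ht) (mul_le_mul hct (hgu n t ht) (norm_nonneg _) (by positivity))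

lemma summable_norm_int_smul_comp_add_int (hc : Continuous g) (hb : 2 < b)
    (hg : g =O[cocompact ℝ] fun x ↦ |x| ^ (-b)) (c : ℤ) (ht : t ∈ Icc (0 : ℝ) 1) :
    Summable fun n : ℤ ↦ ‖((n + c : ℤ) : ℝ) • g (t + n)‖ :=
  let ⟨_, hu, hle⟩ := exists_summable_norm_int_smul_comp_add_int_le hc hb hg c
  hu.of_nonneg_of_le (fun _ ↦ norm_nonneg _) fun n ↦ hle n t ht

lemma continuousOn_excess (hc : Continuous g) (hb : 2 < b)
    (hg : g =O[cocompact ℝ] fun x ↦ |x| ^ (-b)) (c : ℤ) :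
    ContinuousOn (excess g c) (Icc 0 1) := by
  obtain ⟨u, hu, hle⟩ := exists_summable_norm_int_smul_comp_add_int_le hc hb hg c
  refine .sub (continuousOn_tsum (fun n ↦ by fun_prop) hu fun n t ht ↦ ?_) (by fun_prop)
  rw [norm_norm]
  exact hle n t ht

lemma excess_nonneg (hc : Continuous g) (hb : 2 < b)
    (hg : g =O[cocompact ℝ] fun x ↦ |x| ^ (-b)) (c : ℤ) (ht : t ∈ Icc (0 : ℝ) 1)
    (h₀ : HasSum (fun n : ℤ ↦ g (t + n)) 0) (h₁ : HasSum (fun n : ℤ ↦ (n : ℝ) • g (t + n)) 0) :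
    0 ≤ excess g c t := by
  have h0 : HasSum (fun n : ℤ ↦ ((n + c : ℤ) : ℝ) • g (t + n)) 0 := by
    simpa [add_smul] using h₁.add (h₀.const_smul (c : ℝ))
  have hodd : (1 : ℝ) ≤ |((c - 1 + c : ℤ) : ℝ)| := by
    exact_mod_cast Int.one_le_abs (by omega : c - 1 + c ≠ 0)
  refine sub_nonneg.2 (le_trans ?_ (two_mul_norm_le_tsum_norm
    (summable_norm_int_smul_comp_add_int hc hb hg c ht) h0 (c - 1)))
  rw [norm_smul, Real.norm_eq_abs]
  gcongr
  exact le_mul_of_one_le_left (norm_nonneg _) hodd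

lemma convexCombo_abs_int (ht : t ∈ Icc (0 : ℝ) 1) (n : ℤ) :
    t * |((n + 1 : ℤ) : ℝ)| + (1 - t) * |((n + 0 : ℤ) : ℝ)| = |t + n| := by
  have h0 := ht.1
  have h1 := ht.2
  rcases le_or_gt 0 n with hn | hn
  · have hn' : (0 : ℝ) ≤ n := by exact_mod_cast hn
    push_cast
    rw [abs_of_nonneg (by linarith), abs_of_nonneg (by linarith), abs_of_nonneg (by linarith)]
    ring
  · have hn' : (n : ℝ) + 1 ≤ 0 := by exact_mod_cast hn
    push_cast
    rw [abs_of_nonpos (by linarith), abs_of_nonpos (by linarith), abs_of_nonpos (by linarith)]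
    ring

lemma convexCombo_excess (hc : Continuous g) (hb : 2 < b)
    (hg : g =O[cocompact ℝ] fun x ↦ |x| ^ (-b)) (ht : t ∈ Icc (0 : ℝ) 1) :
    t * excess g 1 t + (1 - t) * excess g 0 t =
      ∑' n : ℤ, ‖(t + n) • g (t + n)‖ - 2 * (‖t • g t‖ + ‖(t - 1) • g (t - 1)‖) := by
  have hsum (c : ℤ) := summable_norm_int_smul_comp_add_int hc hb hg c ht
  have htsum : ∑' n : ℤ, ‖(t + n) • g (t + n)‖ =
      t * ∑' n : ℤ, ‖((n + 1 : ℤ) : ℝ) • g (t + n)‖ +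
        (1 - t) * ∑' n : ℤ, ‖((n + 0 : ℤ) : ℝ) • g (t + n)‖ := by
    rw [← tsum_mul_left, ← tsum_mul_left, ← ((hsum 1).mul_left t).tsum_add
      ((hsum 0).mul_left (1 - t))]
    refine tsum_congr fun n ↦ ?_
    simp only [norm_smul, Real.norm_eq_abs, ← convexCombo_abs_int ht n]
    ring
  rw [htsum, excess, excess, norm_smul, norm_smul, Real.norm_of_nonneg ht.1,
    Real.norm_of_nonpos (sub_nonpos.2 ht.2)]
  simp only [sub_self, zero_sub, Int.cast_zero, Int.cast_neg, Int.cast_one, add_zero,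
    ← sub_eq_add_neg]
  ring

lemma integral_convexCombo_excess (hc : Continuous g) (hb : 2 < b)
    (hg : g =O[cocompact ℝ] fun x ↦ |x| ^ (-b))
    (hinv : ∀ x ≠ 0, ‖g (-x⁻¹)‖ = x ^ 4 * ‖g x‖) :
    ∫ t in (0 : ℝ)..1, (t * excess g 1 t + (1 - t) * excess g 0 t) = 0 := by
  set W : ℝ → ℝ := fun x ↦ ‖x • g x‖ with hW
  have hWc : Continuous W := by fun_prop
  have hWO : W =O[cocompact ℝ] fun x ↦ |x| ^ (-(b - 1)) := (isBigO_id_smul_rpow_neg hg).norm_left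
  have hWinv : ∀ x ≠ 0, W (-x⁻¹) = x ^ 2 • W x := fun x hx ↦ by
    have hx' : |x| ≠ 0 := abs_ne_zero.2 hx
    simp only [hW, norm_smul, hinv x hx, Real.norm_eq_abs, smul_eq_mul, abs_neg, abs_inv]
    rw [← abs_sq, abs_pow, ← Even.pow_abs (by decide : Even 4)]
    field_simp
  have hWi : ∀ a b, IntervalIntegrable W volume a b := hWc.intervalIntegrable
  have hWi' : IntervalIntegrable (fun t ↦ W (t - 1)) volume 0 1 :=
    (hWc.comp (continuous_sub_right 1)).intervalIntegrable 0 1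
  have hsum : IntervalIntegrable (fun t ↦ ∑' n : ℤ, W (t + n)) volume 0 1 :=
    (continuousOn_tsum_comp_add_int hWc (by linarith) hWO ⟨uIcc 0 1, isCompact_uIcc⟩
      ).intervalIntegrable
  calc ∫ t in (0 : ℝ)..1, (t * excess g 1 t + (1 - t) * excess g 0 t)
      = ∫ t in (0 : ℝ)..1, (∑' n : ℤ, W (t + n) - 2 * (W t + W (t - 1))) :=
        intervalIntegral.integral_congr fun t ht ↦
          convexCombo_excess hc hb hg (uIcc_of_le (zero_le_one' ℝ) ▸ ht)
    _ = (∫ x, W x) - 2 * ((∫ x in (0 : ℝ)..1, W x) + ∫ x in (-1)..0, W x) := by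
        rw [intervalIntegral.integral_sub hsum (((hWi 0 1).add hWi').const_mul 2),
          intervalIntegral.integral_const_mul, intervalIntegral.integral_add (hWi 0 1) hWi',
          intervalIntegral.integral_comp_sub_right, zero_sub, sub_self,
          intervalIntegral_tsum_comp_add_int hWc (by linarith) hWO]
    _ = 0 := by
        rw [add_comm, intervalIntegral.integral_add_adjacent_intervals (hWi _ _) (hWi _ _),
          integral_eq_two_smul_of_comp_neg_inv
            (integrable_of_isBigO_rpow_neg hWc (by linarith) hWO) hWinv, smul_eq_mul, sub_self]

lemma excess_eq_zero_of_mem_Ioo (hc : Continuous g) (hb : 2 < b)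
    (hg : g =O[cocompact ℝ] fun x ↦ |x| ^ (-b))
    (hinv : ∀ x ≠ 0, ‖g (-x⁻¹)‖ = x ^ 4 * ‖g x‖)
    (h₀ : ∀ t, HasSum (fun n : ℤ ↦ g (t + n)) 0)
    (h₁ : ∀ t, HasSum (fun n : ℤ ↦ (n : ℝ) • g (t + n)) 0) (ht : t ∈ Ioo (0 : ℝ) 1) :
    excess g 0 t = 0 ∧ excess g 1 t = 0 := by
  have hnonneg (c : ℤ) : ∀ s ∈ Icc (0 : ℝ) 1, 0 ≤ excess g c s := fun s hs ↦
    excess_nonneg hc hb hg c hs (h₀ s) (h₁ s)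
  have hcont : ContinuousOn (fun s ↦ s * excess g 1 s + (1 - s) * excess g 0 s) (Icc 0 1) := by
    have := continuousOn_excess hc hb hg
    fun_prop
  have hle : t * excess g 1 t + (1 - t) * excess g 0 t ≤ 0 := by
    by_contra! hpos
    refine (intervalIntegral.integral_pos zero_lt_one hcont (fun s hs ↦ ?_)
      ⟨t, Ioo_subset_Icc_self ht, hpos⟩).ne' (integral_convexCombo_excess hc hb hg hinv)
    have hs := Ioc_subset_Icc_self hs
    exact add_nonneg (mul_nonneg hs.1 (hnonneg 1 s hs))
      (mul_nonneg (sub_nonneg.2 hs.2) (hnonneg 0 s hs))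
  have h0 := hnonneg 0 t (Ioo_subset_Icc_self ht)
  have h1 := hnonneg 1 t (Ioo_subset_Icc_self ht)
  constructor <;> nlinarith [ht.1, ht.2]

lemma excess_eq_zero (hc : Continuous g) (hb : 2 < b)
    (hg : g =O[cocompact ℝ] fun x ↦ |x| ^ (-b))
    (hinv : ∀ x ≠ 0, ‖g (-x⁻¹)‖ = x ^ 4 * ‖g x‖)
    (h₀ : ∀ t, HasSum (fun n : ℤ ↦ g (t + n)) 0)
    (h₁ : ∀ t, HasSum (fun n : ℤ ↦ (n : ℝ) • g (t + n)) 0) (ht : t ∈ Icc (0 : ℝ) 1) :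
    excess g 0 t = 0 ∧ excess g 1 t = 0 := by
  have hIoo := fun s (hs : s ∈ Ioo (0 : ℝ) 1) ↦
    excess_eq_zero_of_mem_Ioo hc hb hg hinv h₀ h₁ hs
  have hsub : Icc (0 : ℝ) 1 ⊆ closure (Ioo 0 1) := (closure_Ioo zero_ne_one).ge
  exact ⟨EqOn.of_subset_closure (fun s hs ↦ (hIoo s hs).1) (continuousOn_excess hc hb hg 0)
    continuousOn_const Ioo_subset_Icc_self hsub ht,
    EqOn.of_subset_closure (fun s hs ↦ (hIoo s hs).2) (continuousOn_excess hc hb hg 1)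
    continuousOn_const Ioo_subset_Icc_self hsub ht⟩

lemma int_apply_eq_zero_of_excess_eq_zero (hc : Continuous g) (hb : 2 < b)
    (hg : g =O[cocompact ℝ] fun x ↦ |x| ^ (-b)) (h0 : excess g 0 0 = 0) (h1 : excess g 1 1 = 0)
    {m : ℤ} (hm : 2 ≤ |m|) : g m = 0 := by
  have hsum : Summable fun n : ℤ ↦ ‖(n : ℝ) • g n‖ := by
    simpa using summable_norm_int_smul_comp_add_int hc hb hg 0 (left_mem_Icc.2 zero_le_one)
  have hneg : ∑' n : ℤ, ‖(n : ℝ) • g n‖ = 2 * ‖g (-1)‖ := by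
    simpa [excess, sub_eq_zero] using h0
  have hpos : ∑' n : ℤ, ‖(n : ℝ) • g n‖ = 2 * ‖g 1‖ := by
    rw [← (Equiv.addRight (1 : ℤ)).tsum_eq]
    simpa [excess, sub_eq_zero, add_comm] using h1
  have hm0 : m ≠ 0 := by rintro rfl; norm_num at hm
  have hm1 : m ≠ 1 := by rintro rfl; norm_num at hm
  have hm1' : m ≠ -1 := by rintro rfl; norm_num at hm
  have hle := hsum.sum_le_tsum {m, 1, -1} fun _ _ ↦ norm_nonneg _
  rw [Finset.sum_insert (by simp [hm1, hm1']), Finset.sum_pair (by norm_num)] at hle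
  push_cast at hle
  rw [one_smul, neg_one_smul, norm_neg] at hle
  have hzero : (m : ℝ) • g m = 0 := norm_le_zero_iff.1 (by linarith)
  exact (smul_eq_zero.1 hzero).resolve_left (Int.cast_ne_zero.2 hm0)

lemma comp_add_int_eq_zero_of_excess_eq_zero (hc : Continuous g) (hb : 2 < b)
    (hg : g =O[cocompact ℝ] fun x ↦ |x| ^ (-b)) (ht : t ∈ Icc (0 : ℝ) 1)
    (h₀ : HasSum (fun n : ℤ ↦ g (t + n)) 0) (h1 : excess g 1 t = 0) (hgt : g t = 0) (n : ℤ) :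
    g (t + n) = 0 := by
  have hsum := summable_norm_int_smul_comp_add_int hc hb hg 1 ht
  have htsum : ∑' n : ℤ, ‖((n + 1 : ℤ) : ℝ) • g (t + n)‖ = 0 := by
    simpa [excess, hgt] using h1
  have hne : ∀ n : ℤ, n ≠ -1 → g (t + n) = 0 := fun n hn ↦ by
    have hzero := (hasSum_zero_iff_of_nonneg fun _ ↦ norm_nonneg _).1 (htsum ▸ hsum.hasSum)
    exact (smul_eq_zero.1 (norm_eq_zero.1 (congrFun hzero n))).resolve_left
      (Int.cast_ne_zero.2 (by omega))
  rcases eq_or_ne n (-1) with rfl | hn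
  · exact (hasSum_single _ hne).unique h₀
  · exact hne n hn

lemma rat_induction_neg_inv_add_int {P : ℚ → Prop} (hint : ∀ m : ℤ, 2 ≤ |m| → P m)
    (hinv : ∀ q ∈ Ioo (0 : ℚ) 1, P (-q⁻¹) → P q)
    (hadd : ∀ q ∈ Ioo (0 : ℚ) 1, ∀ n : ℤ, P q → P (q + n)) (q : ℚ) (hq : q.den ≠ 1) : P q := by
  induction hd : q.den using Nat.strong_induction_on generalizing q with
  | _ d ih =>
    subst hd
    set r := Int.fract q with hr
    have hrden : r.den = q.den := Rat.den_intFract q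
    have hr0 : 0 < r := (Int.fract_nonneg q).lt_of_ne' fun h ↦
      hq (by rw [← hrden, hr, h, Rat.den_zero])
    have hr1 : r < 1 := Int.fract_lt_one q
    have hsden : (-r⁻¹).den = r.num.natAbs := by
      rw [Rat.neg_den, Rat.den_inv_of_ne_zero hr0.ne']
    suffices P (-r⁻¹) by
      rw [← Int.fract_add_floor q]
      exact hadd r ⟨hr0, hr1⟩ _ (hinv r ⟨hr0, hr1⟩ this)
    by_cases hone : (-r⁻¹).den = 1
    · have hm : ((-r⁻¹).num : ℚ) = -r⁻¹ := (Rat.den_eq_one_iff _).1 hone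
      have habs : (1 : ℚ) < |((-r⁻¹).num : ℚ)| := by
        rw [hm, abs_neg, abs_inv, abs_of_pos hr0]
        exact (one_lt_inv₀ hr0).2 hr1
      rw [← hm]
      exact hint _ (by exact_mod_cast habs)
    · refine ih _ ?_ _ hone rfl
      rw [hsden, ← hrden]
      have hnum := Rat.num_pos.2 hr0
      have hlt := Rat.num_lt_denom_iff.2 hr1
      omega

lemma dense_setOf_den_ne_one : Dense ((↑) '' {q : ℚ | q.den ≠ 1} : Set ℝ) := by
  have hopen : IsOpen (range ((↑) : ℤ → ℝ))ᶜ :=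
    Int.isClosedEmbedding_coe_real.isClosed_range.isOpen_compl
  have hdense : Dense (range ((↑) : ℤ → ℝ))ᶜ := (countable_range _).dense_compl ℝ
  refine (hdense.inter_of_isOpen_left Rat.denseRange_cast hopen).mono ?_
  rintro _ ⟨hx, q, rfl⟩
  refine mem_image_of_mem _ fun hq ↦ hx ⟨q.num, ?_⟩
  exact_mod_cast (Rat.den_eq_one_iff q).1 hq

theorem eq_zero_of_norm_comp_neg_inv_of_hasSum (hc : Continuous g)
    (hinv : ∀ x ≠ 0, ‖g (-x⁻¹)‖ = x ^ 4 * ‖g x‖)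
    (h₀ : ∀ t, HasSum (fun n : ℤ ↦ g (t + n)) 0)
    (h₁ : ∀ t, HasSum (fun n : ℤ ↦ (n : ℝ) • g (t + n)) 0) : g = 0 := by
  have hb : (2 : ℝ) < 4 := by norm_num
  have hg : g =O[cocompact ℝ] fun x ↦ |x| ^ (-4 : ℝ) :=
    isBigO_rpow_neg_of_norm_comp_neg_inv hc.continuousAt fun x hx ↦ by
      rw [hinv x hx, ← Even.pow_abs (by decide : Even 4)]
      norm_cast
  have hexcess (t : ℝ) (ht : t ∈ Icc (0 : ℝ) 1) := excess_eq_zero hc hb hg hinv h₀ h₁ ht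
  refine hc.ext_on dense_setOf_den_ne_one continuous_const ?_
  rintro _ ⟨q, hq, rfl⟩
  refine rat_induction_neg_inv_add_int (P := fun q ↦ g q = 0) (fun m hm ↦ ?_) (fun r hr hgr ↦ ?_)
    (fun r hr n hgr ↦ ?_) q hq
  · simpa using int_apply_eq_zero_of_excess_eq_zero hc hb hg
      (hexcess 0 (left_mem_Icc.2 zero_le_one)).1 (hexcess 1 (right_mem_Icc.2 zero_le_one)).2 hm
  · have hr0 : (r : ℝ) ≠ 0 := by exact_mod_cast hr.1.ne'
    have := hinv r hr0
    push_cast at hgr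
    rw [hgr, norm_zero, zero_eq_mul] at this
    exact norm_eq_zero.1 (this.resolve_left (pow_ne_zero 4 hr0))
  · have hr' : (r : ℝ) ∈ Icc (0 : ℝ) 1 := ⟨by exact_mod_cast hr.1.le, by exact_mod_cast hr.2.le⟩
    push_cast
    exact comp_add_int_eq_zero_of_excess_eq_zero hc hb hg hr' (h₀ r) (hexcess r hr').2 hgr n

end TranslateSums

section GaussianPairing

open Module Complex

variable {V E : Type*} [NormedAddCommGroup V] [InnerProductSpace ℝ V] [FiniteDimensional ℝ V]
  [MeasurableSpace V] [BorelSpace V] [NormedAddCommGroup E] [NormedSpace ℂ E] {f : V → E} {τ : ℂ}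

/-- The pairing `∫ exp (π i τ ‖x‖²) f(x) dx` of `f` with a complex Gaussian. The parameter `τ`
ranges over the closed upper half-plane, where the Gaussian is bounded by `1`. -/
def gaussianPairing (f : V → E) (τ : ℂ) : E := ∫ x, cexp (Real.pi * I * τ * ‖x‖ ^ 2) • f x

omit [InnerProductSpace ℝ V] [FiniteDimensional ℝ V] [MeasurableSpace V] [BorelSpace V] in
lemma norm_cexp_pi_I_mul_le_one (hτ : 0 ≤ τ.im) (x : V) :
    ‖cexp (Real.pi * I * τ * ‖x‖ ^ 2)‖ ≤ 1 := by
  have hre : (Real.pi * I * τ * ‖x‖ ^ 2 : ℂ).re = -(Real.pi * τ.im * ‖x‖ ^ 2) := by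
    rw [← ofReal_pow, re_mul_ofReal, mul_assoc, re_ofReal_mul, I_mul_re]
    ring
  rw [norm_exp, hre, Real.exp_le_one_iff, neg_nonpos]
  positivity

lemma continuousOn_gaussianPairing (hf : Integrable f) :
    ContinuousOn (gaussianPairing f) {τ | 0 ≤ τ.im} := by
  refine continuousOn_of_dominated (bound := fun x ↦ ‖f x‖) (fun τ _ ↦ ?_) (fun τ hτ ↦ ?_) hf.norm
    (.of_forall fun x ↦ by fun_prop)
  · exact (by fun_prop : Continuous fun x : V ↦ cexp (Real.pi * I * τ * ‖x‖ ^ 2)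
      ).aestronglyMeasurable.smul hf.aestronglyMeasurable
  · refine .of_forall fun x ↦ ?_
    rw [norm_smul]
    exact mul_le_of_le_one_left (norm_nonneg _) (norm_cexp_pi_I_mul_le_one hτ x)

lemma continuous_gaussianPairing_ofReal (hf : Integrable f) :
    Continuous fun t : ℝ ↦ gaussianPairing f (t : ℂ) :=
  (continuousOn_gaussianPairing hf).comp_continuous continuous_ofReal fun t ↦ (ofReal_im t).ge

variable [CompleteSpace E]

lemma gaussianPairing_fourier_of_im_pos (hf : Integrable f) (hτ : 0 < τ.im) :
    gaussianPairing (𝓕 f) τ = (I / τ) ^ (finrank ℝ V / 2 : ℂ) • gaussianPairing f (-τ⁻¹) := by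
  have hτ0 : τ ≠ 0 := by rintro rfl; simp at hτ
  have hpi : (Real.pi : ℂ) ≠ 0 := ofReal_ne_zero.2 Real.pi_ne_zero
  have hb : 0 < (-(Real.pi * I * τ)).re := by
    rw [neg_re, mul_assoc, re_ofReal_mul, I_mul_re]
    have := Real.pi_pos
    nlinarith
  have hgauss : Integrable fun x : V ↦ cexp (Real.pi * I * τ * ‖x‖ ^ 2) := by
    simpa using GaussianFourier.integrable_cexp_neg_mul_sq_norm_add hb 0 (0 : V)
  have hflip : ∫ x, 𝓕 (fun x : V ↦ cexp (Real.pi * I * τ * ‖x‖ ^ 2)) x • f x =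
      gaussianPairing (𝓕 f) τ := by
    simpa using! VectorFourier.integral_fourierIntegral_smul_eq_flip (L := innerₗ V)
      Real.continuous_fourierChar continuous_inner hgauss hf
  have hfourier (x : V) : 𝓕 (fun x : V ↦ cexp (Real.pi * I * τ * ‖x‖ ^ 2)) x =
      (I / τ) ^ (finrank ℝ V / 2 : ℂ) * cexp (Real.pi * I * (-τ⁻¹) * ‖x‖ ^ 2) := by
    have := fourier_gaussian_innerProductSpace hb x
    rw [neg_neg] at this
    rw [this]
    congr 2
    · field_simp
      simp
    · field_simp
      simp
  rw [← hflip, gaussianPairing, ← integral_smul]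
  simp only [hfourier, mul_smul]

lemma gaussianPairing_fourier (hf : Integrable f) (hFf : Integrable (𝓕 f)) (hτ : 0 ≤ τ.im)
    (hτ0 : τ ≠ 0) :
    gaussianPairing (𝓕 f) τ = (I / τ) ^ (finrank ℝ V / 2 : ℂ) • gaussianPairing f (-τ⁻¹) := by
  have him (z : ℂ) : (-z⁻¹).im = z.im / normSq z := by rw [neg_im, inv_im, neg_div, neg_neg]
  have hmaps : MapsTo (fun z : ℂ ↦ -z⁻¹) {z | 0 ≤ z.im ∧ z ≠ 0} {z | 0 ≤ z.im} := fun z hz ↦ by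
    rw [mem_ofPred_eq, him]
    exact div_nonneg hz.1 (normSq_nonneg z)
  have hslit : ∀ z ∈ {z : ℂ | 0 ≤ z.im ∧ z ≠ 0}, I / z ∈ slitPlane := by
    refine fun z hz ↦ mem_slitPlane_iff.2 ?_
    rw [div_eq_mul_inv, I_mul_re, I_mul_im, inv_re, inv_im]
    rcases hz.1.lt_or_eq with him | him
    · exact .inl (by rw [neg_div, neg_neg]; exact div_pos him (normSq_pos.2 hz.2))
    · exact .inr (div_ne_zero (fun hre ↦ hz.2 (Complex.ext hre him.symm)) (normSq_pos.2 hz.2).ne')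
  have hcont : ContinuousOn (fun z ↦ (I / z) ^ (finrank ℝ V / 2 : ℂ) • gaussianPairing f (-z⁻¹))
      {z | 0 ≤ z.im ∧ z ≠ 0} := by
    refine .smul (.cpow_const ?_ hslit) ((continuousOn_gaussianPairing hf).comp ?_ hmaps)
    · exact continuousOn_const.div continuousOn_id fun z hz ↦ hz.2
    · exact (continuousOn_id.inv₀ fun z hz ↦ hz.2).neg
  refine EqOn.of_subset_closure (s := {z : ℂ | 0 < z.im})
    (fun z hz ↦ gaussianPairing_fourier_of_im_pos hf hz)
    ((continuousOn_gaussianPairing hFf).mono fun z hz ↦ hz.1) hcont (fun z hz ↦ ?_) (fun z hz ↦ ?_)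
    (show τ ∈ {z : ℂ | 0 ≤ z.im ∧ z ≠ 0} from ⟨hτ, hτ0⟩)
  · exact ⟨le_of_lt hz, by rintro rfl; simp at hz⟩
  · simpa using! hz.1

lemma norm_gaussianPairing_neg_inv (hf : Integrable f) (hFf : Integrable (𝓕 f)) {x : ℝ}
    (hx : x ≠ 0) :
    ‖gaussianPairing f ((-x⁻¹ : ℝ) : ℂ)‖ =
      |x| ^ (finrank ℝ V / 2 : ℝ) * ‖gaussianPairing (𝓕 f) (x : ℂ)‖ := by
  have hnorm : ‖(I / x : ℂ) ^ (finrank ℝ V / 2 : ℂ)‖ = (|x| ^ (finrank ℝ V / 2 : ℝ))⁻¹ := by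
    have := norm_cpow_real (I / x) (finrank ℝ V / 2)
    push_cast at this
    rw [this, norm_div, norm_I, norm_real, Real.norm_eq_abs, one_div, Real.inv_rpow (abs_nonneg x)]
  rw [gaussianPairing_fourier hf hFf (by simp) (ofReal_ne_zero.2 hx), norm_smul, hnorm,
    mul_inv_cancel_left₀ (Real.rpow_pos_of_pos (abs_pos.2 hx) _).ne']
  push_cast
  rfl

lemma norm_gaussianPairing_fourier_neg_inv (hf : Integrable f) (hFf : Integrable (𝓕 f)) {x : ℝ}
    (hx : x ≠ 0) :
    ‖gaussianPairing (𝓕 f) ((-x⁻¹ : ℝ) : ℂ)‖ =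
      |x| ^ (finrank ℝ V / 2 : ℝ) * ‖gaussianPairing f (x : ℂ)‖ := by
  have h := norm_gaussianPairing_neg_inv hf hFf (neg_ne_zero.2 (inv_ne_zero hx))
  rw [inv_neg, inv_inv, neg_neg, abs_neg, abs_inv, Real.inv_rpow (abs_nonneg x)] at h
  rw [h, mul_inv_cancel_left₀ (Real.rpow_pos_of_pos (abs_pos.2 hx) _).ne']

lemma norm_gaussianPairing_prodMk_neg_inv (hf : Integrable f) (hFf : Integrable (𝓕 f)) {x : ℝ}
    (hx : x ≠ 0) :
    ‖(gaussianPairing f ((-x⁻¹ : ℝ) : ℂ), gaussianPairing (𝓕 f) ((-x⁻¹ : ℝ) : ℂ))‖ =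
      |x| ^ (finrank ℝ V / 2 : ℝ) *
        ‖(gaussianPairing f (x : ℂ), gaussianPairing (𝓕 f) (x : ℂ))‖ := by
  rw [Prod.norm_mk, Prod.norm_mk, norm_gaussianPairing_neg_inv hf hFf hx,
    norm_gaussianPairing_fourier_neg_inv hf hFf hx, max_comm,
    mul_max_of_nonneg _ _ (Real.rpow_nonneg (abs_nonneg x) _)]

lemma isBigO_gaussianPairing (hf : Integrable f) (hFf : Integrable (𝓕 f)) :
    (fun t : ℝ ↦ gaussianPairing f (t : ℂ)) =O[cocompact ℝ]
      fun t ↦ |t| ^ (-(finrank ℝ V / 2 : ℝ)) :=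
  isBigO_rpow_neg_of_norm_comp_neg_inv (continuous_gaussianPairing_ofReal hFf).continuousAt
    fun _ hx ↦ norm_gaussianPairing_fourier_neg_inv hf hFf hx

end GaussianPairing

section HalfSqDensity

open Module Metric

variable {V E : Type*} [NormedAddCommGroup V] [InnerProductSpace ℝ V] [FiniteDimensional ℝ V]
  [MeasurableSpace V] [BorelSpace V] [NormedAddCommGroup E] [NormedSpace ℝ E] {φ : ℝ → E} {u : ℝ}

variable (V) in
/-- The density of the image under `x ↦ ‖x‖² / 2` of the `E`-valued measure `φ ‖x‖ dx` on `V`. -/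
def halfSqDensity (φ : ℝ → E) : ℝ → E :=
  (Ioi 0).indicator fun u ↦ (finrank ℝ V * volume.real (ball (0 : V) 1) *
    (2 * u) ^ (finrank ℝ V / 2 - 1 : ℝ)) • φ √(2 * u)

lemma halfSqDensity_of_pos (hu : 0 < u) :
    halfSqDensity V φ u = (finrank ℝ V * volume.real (ball (0 : V) 1) *
      (2 * u) ^ (finrank ℝ V / 2 - 1 : ℝ)) • φ √(2 * u) :=
  indicator_of_mem (mem_Ioi.2 hu) _

lemma halfSqDensity_of_nonpos (hu : u ≤ 0) : halfSqDensity V φ u = 0 :=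
  indicator_of_notMem (notMem_Ioi.2 hu) _

lemma support_halfSqDensity_subset : Function.support (halfSqDensity V φ) ⊆ Ioi 0 :=
  support_indicator_subset

lemma hasDerivAt_sq_div_two (r : ℝ) : HasDerivAt (fun r : ℝ ↦ r ^ 2 / 2) r r := by
  simpa using (hasDerivAt_pow 2 r).div_const 2

lemma injOn_sq_div_two : InjOn (fun r : ℝ ↦ r ^ 2 / 2) (Ioi 0) := fun _ hr _ hs h ↦
  (pow_left_inj₀ (le_of_lt hr) (le_of_lt hs) two_ne_zero).1 ((div_left_inj' two_ne_zero).1 h)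

lemma image_sq_div_two_Ioi : (fun r : ℝ ↦ r ^ 2 / 2) '' Ioi 0 = Ioi (0 : ℝ) := by
  refine Subset.antisymm (image_subset_iff.2 fun r (hr : 0 < r) ↦ ?_) fun u (hu : 0 < u) ↦ ?_
  · exact (by positivity : 0 < r ^ 2 / 2)
  · refine ⟨√(2 * u), mem_Ioi.2 (by positivity), ?_⟩
    dsimp only
    rw [Real.sq_sqrt (by positivity), mul_div_cancel_left₀ _ two_ne_zero]

lemma continuous_halfSqDensity (hV : 2 < finrank ℝ V) (hφ : Continuous φ) :
    Continuous (halfSqDensity V φ) := by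
  have hexp : 0 < (finrank ℝ V / 2 - 1 : ℝ) := by
    have : (2 : ℝ) < finrank ℝ V := mod_cast hV
    linarith
  refine continuous_indicator (fun u hu ↦ ?_) (Continuous.continuousOn ?_)
  · rw [frontier_Ioi, mem_singleton_iff] at hu
    rw [hu, mul_zero, Real.zero_rpow hexp.ne', mul_zero, zero_smul]
  · have := (continuous_const_mul (2 : ℝ)).rpow_const fun _ ↦ .inr hexp.le
    fun_prop

lemma hasDerivAt_halfSqDensity_zero (hu : 0 < u) (hφ : φ √(2 * u) = 0)
    (hφ' : HasDerivAt φ 0 √(2 * u)) : HasDerivAt (halfSqDensity V φ) 0 u := by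
  have h2u : 2 * u ≠ 0 := by positivity
  have hsqrt := ((hasDerivAt_id' u).const_mul 2).sqrt h2u
  have hpow := (((hasDerivAt_id' u).const_mul 2).rpow_const (p := finrank ℝ V / 2 - 1)
    (.inl h2u)).const_mul (finrank ℝ V * volume.real (ball (0 : V) 1))
  have hderiv := hpow.smul (hφ'.scomp u hsqrt)
  simp only [Function.comp_apply, hφ, smul_zero, add_zero] at hderiv
  refine hderiv.congr_of_eventuallyEq ?_
  filter_upwards [lt_mem_nhds hu] with v hv using halfSqDensity_of_pos hv

-- The density may fail to be differentiable at `0`, where `deriv` is then `0` by convention.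
lemma deriv_halfSqDensity_of_nonpos (hu : u ≤ 0) : deriv (halfSqDensity V φ) u = 0 := by
  by_cases hd : DifferentiableAt ℝ (halfSqDensity V φ) u
  · have hzero : EqOn (halfSqDensity V φ) (fun _ ↦ 0) (Iic u) :=
      fun v hv ↦ halfSqDensity_of_nonpos (le_trans hv hu)
    exact (uniqueDiffWithinAt_Iic u).eq_deriv _ hd.hasDerivAt.hasDerivWithinAt
      ((hasDerivWithinAt_const u _ 0).congr hzero (hzero self_mem_Iic))
  · exact deriv_zero_of_not_differentiableAt hd

lemma halfSqDensity_intCast_eq_zero (h₁ : ∀ n : ℕ, 1 ≤ n → φ √(2 * n) = 0) (n : ℤ) :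
    halfSqDensity V φ n = 0 := by
  rcases le_or_gt n 0 with hn | hn
  · exact halfSqDensity_of_nonpos (mod_cast hn)
  · lift n to ℕ using hn.le
    rw [halfSqDensity_of_pos (mod_cast hn), Int.cast_natCast, h₁ n (mod_cast hn), smul_zero]

lemma deriv_halfSqDensity_intCast_eq_zero (h₁ : ∀ n : ℕ, 1 ≤ n → φ √(2 * n) = 0)
    (h₂ : ∀ n : ℕ, 1 ≤ n → HasDerivAt φ 0 √(2 * n)) (n : ℤ) :
    deriv (halfSqDensity V φ) n = 0 := by
  rcases le_or_gt n 0 with hn | hn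
  · exact deriv_halfSqDensity_of_nonpos (mod_cast hn)
  · lift n to ℕ using hn.le
    exact (hasDerivAt_halfSqDensity_zero (mod_cast hn) (h₁ n (mod_cast hn))
      (h₂ n (mod_cast hn))).deriv

variable [Nontrivial V]

variable (V) in
lemma finrank_mul_volume_ball_ne_zero : finrank ℝ V * volume.real (ball (0 : V) 1) ≠ 0 := by
  have hball : 0 < volume.real (ball (0 : V) 1) :=
    ENNReal.toReal_pos (measure_ball_pos volume (0 : V) one_pos).ne' measure_ball_lt_top.ne
  exact mul_ne_zero (Nat.cast_ne_zero.2 finrank_pos.ne') hball.ne'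

lemma abs_smul_halfSqDensity_sq_div_two {r : ℝ} (hr : 0 < r) :
    |r| • halfSqDensity V φ (r ^ 2 / 2) =
      (finrank ℝ V * volume.real (ball (0 : V) 1)) • r ^ (finrank ℝ V - 1) • φ r := by
  have hpow : r * (r ^ 2) ^ (finrank ℝ V / 2 - 1 : ℝ) = r ^ (finrank ℝ V - 1) := by
    rw [← Real.rpow_natCast r (finrank ℝ V - 1), Nat.cast_pred finrank_pos, ← Real.rpow_natCast,
      ← Real.rpow_mul hr.le, mul_comm, ← Real.rpow_add_one hr.ne']
    congr 1
    push_cast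
    ring
  rw [halfSqDensity_of_pos (by positivity), mul_div_cancel₀ _ two_ne_zero, Real.sqrt_sq hr.le,
    abs_of_pos hr, smul_smul, smul_smul, mul_left_comm, hpow]

variable (V) in
lemma integral_halfSqDensity (φ : ℝ → E) :
    ∫ u, halfSqDensity V φ u = ∫ x : V, φ ‖x‖ := by
  have hsubst := integral_image_eq_integral_abs_deriv_smul measurableSet_Ioi
    (fun r _ ↦ (hasDerivAt_sq_div_two r).hasDerivWithinAt) injOn_sq_div_two (halfSqDensity V φ)
  rw [image_sq_div_two_Ioi] at hsubst
  rw [← setIntegral_eq_integral_of_forall_compl_eq_zero (s := Ioi 0)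
    (fun u hu ↦ halfSqDensity_of_nonpos (notMem_Ioi.1 hu)), hsubst,
    setIntegral_congr_fun measurableSet_Ioi fun r hr ↦ abs_smul_halfSqDensity_sq_div_two hr,
    integral_smul, integral_fun_norm_addHaar, mul_smul, Nat.cast_smul_eq_nsmul]

lemma integrable_halfSqDensity_iff :
    Integrable (halfSqDensity V φ) ↔ Integrable fun x : V ↦ φ ‖x‖ := by
  have hsubst := integrableOn_image_iff_integrableOn_abs_deriv_smul measurableSet_Ioi
    (fun r _ ↦ (hasDerivAt_sq_div_two r).hasDerivWithinAt) injOn_sq_div_two (halfSqDensity V φ)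
  rw [image_sq_div_two_Ioi] at hsubst
  rw [← integrableOn_iff_integrable_of_support_subset support_halfSqDensity_subset, hsubst,
    integrableOn_congr_fun (fun r (hr : r ∈ Ioi 0) ↦ abs_smul_halfSqDensity_sq_div_two hr)
      measurableSet_Ioi,
    IntegrableOn, integrable_fun_smul_iff (finrank_mul_volume_ball_ne_zero V),
    integrable_fun_norm_addHaar]
  rfl

lemma eq_zero_of_halfSqDensity_eq_zero (h : halfSqDensity V φ = 0) {r : ℝ} (hr : 0 < r) :
    φ r = 0 := by
  have hr' := abs_smul_halfSqDensity_sq_div_two (V := V) (φ := φ) hr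
  rw [h, Pi.zero_apply, smul_zero, eq_comm,
    smul_eq_zero_iff_right (finrank_mul_volume_ball_ne_zero V)] at hr'
  exact (smul_eq_zero_iff_right (pow_pos hr _).ne').1 hr'

end HalfSqDensity

section RadialGaussianPairing

open Module Complex

variable {V : Type*} [NormedAddCommGroup V] [InnerProductSpace ℝ V] [FiniteDimensional ℝ V]
  [MeasurableSpace V] [BorelSpace V]

lemma fourier_eq_of_norm_eq {E : Type*} [NormedAddCommGroup E] [NormedSpace ℂ E] {f : V → E}
    (hrad : ∀ x y, ‖x‖ = ‖y‖ → f x = f y) (x y : V) (hxy : ‖x‖ = ‖y‖) : 𝓕 f x = 𝓕 f y := by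
  let A := Submodule.reflection (Submodule.span ℝ {x - y})ᗮ
  have hfA : f ∘ A = f := funext fun z ↦ hrad _ _ (A.norm_map z)
  have hcomp := Real.fourier_comp_linearIsometry A f x
  rwa [hfA, Submodule.reflection_sub hxy] at hcomp

variable {f : V → ℂ}

lemma continuous_fourier_of_integrable (hf : Integrable f) : Continuous (𝓕 f) :=
  VectorFourier.fourierIntegral_continuous (L := innerₗ V) Real.continuous_fourierChar
    continuous_inner hf

lemma integrable_fourier_fourier (hc : Continuous f) (hf : Integrable f)
    (hFf : Integrable (𝓕 f)) : Integrable (𝓕 (𝓕 f)) := by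
  have hneg (x : V) : 𝓕 (𝓕 f) x = f (-x) := by
    rw [← congrFun (hc.fourierInv_fourier_eq hf hFf) (-x), Real.fourierInv_eq_fourier_neg, neg_neg]
  exact hf.comp_neg.congr (.of_forall fun x ↦ (hneg x).symm)

lemma integrable_gaussianPairing (hV : 2 < finrank ℝ V) (hf : Integrable f)
    (hFf : Integrable (𝓕 f)) : Integrable fun t : ℝ ↦ gaussianPairing f (t : ℂ) :=
  have hV' : (2 : ℝ) < finrank ℝ V := mod_cast hV
  integrable_of_isBigO_rpow_neg (continuous_gaussianPairing_ofReal hf) (by linarith)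
    (isBigO_gaussianPairing hf hFf)

variable [Nontrivial V] {φ : ℝ → ℂ}

lemma gaussianPairing_eq_fourierInv (hfφ : ∀ x, f x = φ ‖x‖) (t : ℝ) :
    gaussianPairing f (t : ℂ) = 𝓕⁻ (halfSqDensity V φ) t := by
  have hmul (u : ℝ) : cexp (↑(2 * Real.pi * inner ℝ u t) * I) • halfSqDensity V φ u =
      halfSqDensity V (fun r ↦ cexp (Real.pi * I * t * r ^ 2) • φ r) u := by
    rcases le_or_gt u 0 with hu | hu
    · rw [halfSqDensity_of_nonpos hu, halfSqDensity_of_nonpos hu, smul_zero]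
    · rw [halfSqDensity_of_pos hu, halfSqDensity_of_pos hu, smul_comm, ← ofReal_pow,
        Real.sq_sqrt (by positivity)]
      congr 3
      simp only [RCLike.inner_apply, conj_trivial, ofReal_mul, ofReal_ofNat]
      ring
  rw [Real.fourierInv_eq']
  simp only [hmul, gaussianPairing, hfφ]
  exact (integral_halfSqDensity V fun r ↦ cexp (Real.pi * I * t * r ^ 2) • φ r).symm

lemma fourier_gaussianPairing (hV : 2 < finrank ℝ V) (hφ : Continuous φ) (hfφ : ∀ x, f x = φ ‖x‖)
    (hf : Integrable f) (hFf : Integrable (𝓕 f)) :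
    𝓕 (fun t : ℝ ↦ gaussianPairing f (t : ℂ)) = halfSqDensity V φ := by
  have hpair : (fun t : ℝ ↦ gaussianPairing f (t : ℂ)) = 𝓕⁻ (halfSqDensity V φ) :=
    funext (gaussianPairing_eq_fourierInv hfφ)
  have hdensity : Integrable (halfSqDensity V φ) :=
    integrable_halfSqDensity_iff.2 (hf.congr (.of_forall hfφ))
  have hfourier : Integrable (𝓕 (halfSqDensity V φ)) := by
    have := (hpair ▸ integrable_gaussianPairing hV hf hFf).comp_neg
    simpa only [Real.fourierInv_eq_fourier_neg, neg_neg] using this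
  rw [hpair]
  exact (continuous_halfSqDensity hV hφ).fourier_fourierInv_eq hdensity hfourier

lemma eq_zero_of_gaussianPairing_eq_zero (hV : 2 < finrank ℝ V) (hφ : Continuous φ)
    (hfφ : ∀ x, f x = φ ‖x‖) (hf : Integrable f) (hFf : Integrable (𝓕 f))
    (h : ∀ t : ℝ, gaussianPairing f (t : ℂ) = 0) : f = 0 := by
  have hdensity : halfSqDensity V φ = 0 := by
    rw [← fourier_gaussianPairing hV hφ hfφ hf hFf, funext h]
    ext w
    simp [Real.fourier_eq]
  have hcont : Continuous f := (funext hfφ : f = fun x ↦ φ ‖x‖) ▸ hφ.comp continuous_norm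
  refine hcont.ext_on (dense_compl_singleton 0) continuous_zero fun x hx ↦ ?_
  rw [hfφ, eq_zero_of_halfSqDensity_eq_zero hdensity (norm_pos_iff.2 hx), Pi.zero_apply]

lemma hasSum_gaussianPairing_comp_add_int (hV : 2 < finrank ℝ V) (hφ : Continuous φ)
    (hfφ : ∀ x, f x = φ ‖x‖) (hf : Integrable f) (hFf : Integrable (𝓕 f))
    (h₁ : ∀ n : ℕ, 1 ≤ n → φ √(2 * n) = 0) (t : ℝ) :
    HasSum (fun n : ℤ ↦ gaussianPairing f ((t + n : ℝ) : ℂ)) 0 := by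
  have hV' : (2 : ℝ) < finrank ℝ V := mod_cast hV
  refine hasSum_comp_add_int_eq_zero (continuous_gaussianPairing_ofReal hf) (by linarith)
    (isBigO_gaussianPairing hf hFf) (fun n ↦ ?_) t
  rw [fourier_gaussianPairing hV hφ hfφ hf hFf, halfSqDensity_intCast_eq_zero h₁]

lemma hasSum_int_smul_gaussianPairing_comp_add_int (hV : 4 < finrank ℝ V) (hφ : Continuous φ)
    (hfφ : ∀ x, f x = φ ‖x‖) (hf : Integrable f) (hFf : Integrable (𝓕 f))
    (h₁ : ∀ n : ℕ, 1 ≤ n → φ √(2 * n) = 0) (h₂ : ∀ n : ℕ, 1 ≤ n → HasDerivAt φ 0 √(2 * n))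
    (t : ℝ) : HasSum (fun n : ℤ ↦ (n : ℝ) • gaussianPairing f ((t + n : ℝ) : ℂ)) 0 := by
  have hV' : (4 : ℝ) < finrank ℝ V := mod_cast hV
  have hfourier := fourier_gaussianPairing (by linarith) hφ hfφ hf hFf
  refine hasSum_int_smul_comp_add_int_eq_zero (continuous_gaussianPairing_ofReal hf) (by linarith)
    (isBigO_gaussianPairing hf hFf) (fun n ↦ ?_) (fun n ↦ ?_) t
  · rw [hfourier, halfSqDensity_intCast_eq_zero h₁]
  · rw [hfourier, deriv_halfSqDensity_intCast_eq_zero h₁ h₂]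

end RadialGaussianPairing

theorem interpolation_uniqueness_dim8_general {V : Type*} [NormedAddCommGroup V]
    [InnerProductSpace ℝ V] [FiniteDimensional ℝ V] [MeasurableSpace V] [BorelSpace V]
    (hV : Module.finrank ℝ V = 8) {e : V} (he : ‖e‖ = 1) {f : V → ℂ} (hf : Continuous f)
    (hfi : Integrable f) (hFfi : Integrable (𝓕 f)) (hrad : ∀ x y, ‖x‖ = ‖y‖ → f x = f y)
    (h₁ : ∀ n : ℕ, 1 ≤ n → f (√(2 * n) • e) = 0)
    (h₂ : ∀ n : ℕ, 1 ≤ n → HasDerivAt (fun r : ℝ ↦ f (r • e)) 0 √(2 * n))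
    (h₃ : ∀ n : ℕ, 1 ≤ n → 𝓕 f (√(2 * n) • e) = 0)
    (h₄ : ∀ n : ℕ, 1 ≤ n → HasDerivAt (fun r : ℝ ↦ 𝓕 f (r • e)) 0 √(2 * n)) : f = 0 := by
  have : Nontrivial V := Module.nontrivial_of_finrank_pos (R := ℝ) (by lia)
  have hnorm (x : V) : ‖x‖ = ‖‖x‖ • e‖ := by rw [norm_smul, he, mul_one, norm_norm]
  have hfe (x : V) : f x = f (‖x‖ • e) := hrad _ _ (hnorm x)
  have hFfe (x : V) : 𝓕 f x = 𝓕 f (‖x‖ • e) := fourier_eq_of_norm_eq hrad _ _ (hnorm x)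
  have hφ : Continuous fun r : ℝ ↦ f (r • e) := by fun_prop
  have hψ : Continuous fun r : ℝ ↦ 𝓕 f (r • e) :=
    (continuous_fourier_of_integrable hfi).comp (by fun_prop)
  have hFF : Integrable (𝓕 (𝓕 f)) := integrable_fourier_fourier hf hfi hFfi
  let g (t : ℝ) : ℂ × ℂ := (gaussianPairing f (t : ℂ), gaussianPairing (𝓕 f) (t : ℂ))
  have hg : Continuous g :=
    (continuous_gaussianPairing_ofReal hfi).prodMk (continuous_gaussianPairing_ofReal hFfi)
  have hinv (x : ℝ) (hx : x ≠ 0) : ‖g (-x⁻¹)‖ = x ^ 4 * ‖g x‖ := by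
    have hx4 : |x| ^ (Module.finrank ℝ V / 2 : ℝ) = x ^ 4 := by
      rw [hV, ← Even.pow_abs (by decide : Even 4)]
      norm_num
    exact hx4 ▸ norm_gaussianPairing_prodMk_neg_inv hfi hFfi hx
  have hg0 : g = 0 := eq_zero_of_norm_comp_neg_inv_of_hasSum hg hinv
    (fun t ↦ (hasSum_gaussianPairing_comp_add_int (by lia) hφ hfe hfi hFfi h₁ t).prodMk
      (hasSum_gaussianPairing_comp_add_int (by lia) hψ hFfe hFfi hFF h₃ t))
    (fun t ↦ (hasSum_int_smul_gaussianPairing_comp_add_int (by lia) hφ hfe hfi hFfi h₁ h₂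
      t).prodMk (hasSum_int_smul_gaussianPairing_comp_add_int (by lia) hψ hFfe hFfi hFF h₃ h₄ t))
  exact eq_zero_of_gaussianPairing_eq_zero (by lia) hφ hfe hfi hFfi fun t ↦
    congrArg Prod.fst (congrFun hg0 t)

lemma norm_e₁ : ‖e₁‖ = 1 := by simp [e₁]

lemma hasDerivAt_zero_of_radDeriv_eq_zero {f : SchwartzMap (EuclideanSpace ℝ (Fin 8)) ℂ} {r : ℝ}
    (h : radDeriv f r = 0) : HasDerivAt (fun t : ℝ ↦ f (t • e₁)) 0 r := by
  have hdiff : DifferentiableAt ℝ (fun t : ℝ ↦ f (t • e₁)) r :=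
    f.differentiableAt.comp r (by fun_prop)
  exact h ▸ hdiff.hasDerivAt

end

/-- Uniqueness in the interpolation theorem in dimension 8: a radial Schwartz function on `ℝ⁸`
all of whose values and radial derivatives, together with those of its Fourier transform,
vanish at the radii `√(2n)` for integers `n ≥ 1`, is identically zero. -/
theorem interpolation_uniqueness_dim8 (f : SchwartzMap (EuclideanSpace ℝ (Fin 8)) ℂ)
    (hrad : IsRadial f)
    (h₁ : ∀ n : ℕ, 1 ≤ n → radVal f (Real.sqrt (2 * n)) = 0)
    (h₂ : ∀ n : ℕ, 1 ≤ n → radDeriv f (Real.sqrt (2 * n)) = 0)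
    (h₃ : ∀ n : ℕ, 1 ≤ n → radVal (FT f) (Real.sqrt (2 * n)) = 0)
    (h₄ : ∀ n : ℕ, 1 ≤ n → radDeriv (FT f) (Real.sqrt (2 * n)) = 0) :
    f = 0 := by
  have hcoe : FourierTransform.fourier (f : EuclideanSpace ℝ (Fin 8) → ℂ) = FT f :=
    (SchwartzMap.fourier_coe f).symm
  refine DFunLike.coe_injective (interpolation_uniqueness_dim8_general (by simp) norm_e₁
    f.continuous f.integrable (hcoe ▸ (FT f).integrable) hrad h₁
    (fun n hn ↦ hasDerivAt_zero_of_radDeriv_eq_zero (h₂ n hn)) (hcoe ▸ h₃)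
    fun n hn ↦ hcoe ▸ hasDerivAt_zero_of_radDeriv_eq_zero (h₄ n hn))

end
end

section
/- Let k be an even integer, let F : ℍ → ℂ be holomorphic, let 𝒮 ⊆ ℍ, and let C, N ≥ 0 be real numbers such that ‖F(g • i)‖ ≤ C·‖g‖_F^{N} for every g ∈ SL₂(ℝ) with g • i ∈ 𝒮. Then for all γ, g ∈ SL₂(ℝ) with (γ·g) • i ∈ 𝒮, writing τ = g • i and letting c, d be the bottom-row entries of γ, one has ‖(c·τ + d)^{−k} · F(γ • τ)‖ ≤ C · ‖γ‖_F^{N+|k|} · ‖g‖_F^{N+2|k|}. -/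
open scoped MatrixGroups Manifold
open UpperHalfPlane

/-- The Frobenius norm of an element of `SL₂(ℝ)`. -/
noncomputable def frobNorm (g : Matrix.SpecialLinearGroup (Fin 2) ℝ) : ℝ :=
  Real.sqrt (∑ i : Fin 2, ∑ j : Fin 2, ((g : Matrix (Fin 2) (Fin 2) ℝ) i j) ^ 2)

/-!
By the cocycle identity `j(γ, g·i) = j(γg, i) / j(g, i)` for `j(γ, τ) = cτ + d`, it suffices to
control `j` at the base point. There `j(g, i)` is bounded by `‖g‖_F`, being a row of `g` read as a
complex number, and so is its inverse, because `1 = det g = Im ((ai + b) · conj (ci + d))` is at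
most the product of the norms of the two rows.
-/

theorem norm_zpow_le_pow_natAbs {𝕜 : Type*} [NormedDivisionRing 𝕜] {z : 𝕜} {B : ℝ}
    (hz : ‖z‖ ≤ B) (hz_inv : ‖z⁻¹‖ ≤ B) (k : ℤ) : ‖z ^ k‖ ≤ B ^ k.natAbs := by
  obtain ⟨n, rfl | rfl⟩ := k.eq_nat_or_neg
  · simpa using pow_le_pow_left₀ (norm_nonneg z) hz n
  · simpa using pow_le_pow_left₀ (norm_nonneg z⁻¹) hz_inv n

open scoped Matrix.Norms.Frobenius in
theorem frobNorm_eq_norm (g : SL(2, ℝ)) : frobNorm g = ‖(g : Matrix (Fin 2) (Fin 2) ℝ)‖ := by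
  simp [frobNorm, Matrix.frobenius_norm_def, Real.sqrt_eq_rpow]

theorem frobNorm_mul_le (g h : SL(2, ℝ)) : frobNorm (g * h) ≤ frobNorm g * frobNorm h := by
  simpa only [frobNorm_eq_norm, Matrix.SpecialLinearGroup.coe_mul] using
    Matrix.frobenius_norm_mul (g : Matrix (Fin 2) (Fin 2) ℝ) (h : Matrix (Fin 2) (Fin 2) ℝ)

theorem norm_row_le_frobNorm (g : SL(2, ℝ)) (i : Fin 2) :
    ‖(g i 0 : ℂ) * Complex.I + (g i 1 : ℂ)‖ ≤ frobNorm g := by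
  rw [add_comm, Complex.norm_add_mul_I, add_comm, ← Fin.sum_univ_two (fun j ↦ g i j ^ 2)]
  exact Real.sqrt_le_sqrt <| Finset.single_le_sum (f := fun i ↦ ∑ j, g i j ^ 2)
    (fun _ _ ↦ by positivity) (Finset.mem_univ i)

theorem norm_num_I_le_frobNorm (g : SL(2, ℝ)) : ‖num g I‖ ≤ frobNorm g :=
  norm_row_le_frobNorm g 0

theorem norm_denom_I_le_frobNorm (g : SL(2, ℝ)) : ‖denom g I‖ ≤ frobNorm g :=
  norm_row_le_frobNorm g 1

theorem frobNorm_pos (g : SL(2, ℝ)) : 0 < frobNorm g :=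
  (norm_pos_iff.2 (denom_ne_zero g I)).trans_le (norm_denom_I_le_frobNorm g)

open scoped ComplexConjugate in
theorem det_mul_im_le_norm_num_mul_norm_denom (g : GL (Fin 2) ℝ) (z : ℂ) :
    g.det.val * z.im ≤ ‖num g z‖ * ‖denom g z‖ := by
  have im_eq : (num g z * conj (denom g z)).im = g.det.val * z.im := by
    simp only [num, denom, map_add, map_mul, Complex.conj_ofReal, Complex.mul_im, Complex.add_re,
      Complex.mul_re, Complex.ofReal_re, Complex.ofReal_im, Complex.add_im, Complex.conj_im,
      Complex.conj_re, Matrix.GeneralLinearGroup.val_det_apply, Matrix.det_fin_two]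
    ring
  calc g.det.val * z.im ≤ ‖num g z * conj (denom g z)‖ := im_eq ▸ Complex.im_le_norm _
    _ = ‖num g z‖ * ‖denom g z‖ := by rw [norm_mul, Complex.norm_conj]

theorem norm_inv_denom_I_le_frobNorm (g : SL(2, ℝ)) : ‖(denom g I)⁻¹‖ ≤ frobNorm g := by
  rw [norm_inv, inv_le_iff_one_le_mul₀ (norm_pos_iff.2 (denom_ne_zero g I))]
  calc 1 ≤ ‖num g I‖ * ‖denom g I‖ := by
        simpa using det_mul_im_le_norm_num_mul_norm_denom g I
    _ ≤ frobNorm g * ‖denom g I‖ := by gcongr; exact norm_num_I_le_frobNorm g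

theorem denom_mul_specialLinearGroup (γ g : SL(2, ℝ)) (z : ℍ) :
    denom (γ * g : SL(2, ℝ)) z = denom γ (g • z : ℍ) * denom g z := by
  rw [map_mul, denom_cocycle_σ, σ, if_pos (by simp)]
  rfl

theorem denom_smul_I (γ g : SL(2, ℝ)) :
    denom γ (g • I : ℍ) = denom (γ * g : SL(2, ℝ)) I * (denom g I)⁻¹ :=
  (eq_mul_inv_iff_mul_eq₀ (denom_ne_zero g I)).2 (denom_mul_specialLinearGroup γ g I).symm

theorem frobNorm_mul_mul_frobNorm_le (γ g : SL(2, ℝ)) :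
    frobNorm (γ * g) * frobNorm g ≤ frobNorm γ * frobNorm g ^ 2 := by
  rw [sq, ← mul_assoc]
  exact mul_le_mul_of_nonneg_right (frobNorm_mul_le γ g) (frobNorm_pos g).le

theorem norm_denom_smul_I_le (γ g : SL(2, ℝ)) :
    ‖denom γ (g • I : ℍ)‖ ≤ frobNorm γ * frobNorm g ^ 2 := by
  calc ‖denom γ (g • I : ℍ)‖ = ‖denom (γ * g : SL(2, ℝ)) I‖ * ‖(denom g I)⁻¹‖ := by
        rw [denom_smul_I, norm_mul]
    _ ≤ frobNorm (γ * g) * frobNorm g := by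
        gcongr
        exacts [(frobNorm_pos _).le, norm_denom_I_le_frobNorm _, norm_inv_denom_I_le_frobNorm _]
    _ ≤ frobNorm γ * frobNorm g ^ 2 := frobNorm_mul_mul_frobNorm_le γ g

theorem norm_inv_denom_smul_I_le (γ g : SL(2, ℝ)) :
    ‖(denom γ (g • I : ℍ))⁻¹‖ ≤ frobNorm γ * frobNorm g ^ 2 := by
  calc ‖(denom γ (g • I : ℍ))⁻¹‖ = ‖(denom (γ * g : SL(2, ℝ)) I)⁻¹‖ * ‖denom g I‖ := by
        rw [denom_smul_I, mul_inv, inv_inv, norm_mul]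
    _ ≤ frobNorm (γ * g) * frobNorm g := by
        gcongr
        exacts [(frobNorm_pos _).le, norm_inv_denom_I_le_frobNorm _, norm_denom_I_le_frobNorm _]
    _ ≤ frobNorm γ * frobNorm g ^ 2 := frobNorm_mul_mul_frobNorm_le γ g

theorem norm_denom_smul_I_zpow_le (γ g : SL(2, ℝ)) (k : ℤ) :
    ‖denom γ (g • I : ℍ) ^ k‖ ≤ frobNorm γ ^ |(k : ℝ)| * frobNorm g ^ (2 * |(k : ℝ)|) := by
  have hγ := (frobNorm_pos γ).le
  have hg := (frobNorm_pos g).le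
  calc ‖denom γ (g • I : ℍ) ^ k‖ ≤ (frobNorm γ * frobNorm g ^ 2) ^ k.natAbs :=
        norm_zpow_le_pow_natAbs (norm_denom_smul_I_le γ g) (norm_inv_denom_smul_I_le γ g) k
    _ = (frobNorm γ * frobNorm g ^ (2 : ℝ)) ^ |(k : ℝ)| := by
        rw [← Int.cast_abs, ← Nat.cast_natAbs, Real.rpow_natCast, Real.rpow_two]
    _ = frobNorm γ ^ |(k : ℝ)| * frobNorm g ^ (2 * |(k : ℝ)|) := by
        rw [Real.mul_rpow hγ (by positivity), ← Real.rpow_mul hg]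

theorem slash_moderate_growth_general {E : Type*} [SeminormedAddCommGroup E] [NormedSpace ℂ E]
    (k : ℤ) {F : ℍ → E} {S : Set ℍ} {C N : ℝ} (hN : 0 ≤ N)
    (hbound : ∀ g : SL(2, ℝ), g • I ∈ S → ‖F (g • I)‖ ≤ C * frobNorm g ^ N)
    {γ g : SL(2, ℝ)} (hS : (γ * g) • I ∈ S) :
    ‖denom γ (g • I : ℍ) ^ (-k) • F (γ • g • I)‖
      ≤ C * frobNorm γ ^ (N + |(k : ℝ)|) * frobNorm g ^ (N + 2 * |(k : ℝ)|) := by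
  have hγ := frobNorm_pos γ
  have hg := frobNorm_pos g
  have hF := hbound (γ * g) hS
  have hC : 0 ≤ C := nonneg_of_mul_nonneg_left ((norm_nonneg _).trans hF)
    (Real.rpow_pos_of_pos (frobNorm_pos (γ * g)) N)
  have hF_le : ‖F (γ • g • I)‖ ≤ C * (frobNorm γ ^ N * frobNorm g ^ N) := by
    rw [← mul_smul, ← Real.mul_rpow hγ.le hg.le]
    refine hF.trans ?_
    gcongr
    exacts [(frobNorm_pos _).le, frobNorm_mul_le γ g]
  have hdenom := norm_denom_smul_I_zpow_le γ g (-k)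
  rw [Int.cast_neg, abs_neg] at hdenom
  calc ‖denom γ (g • I : ℍ) ^ (-k) • F (γ • g • I)‖
      = ‖denom γ (g • I : ℍ) ^ (-k)‖ * ‖F (γ • g • I)‖ := norm_smul _ _
    _ ≤ frobNorm γ ^ |(k : ℝ)| * frobNorm g ^ (2 * |(k : ℝ)|) *
          (C * (frobNorm γ ^ N * frobNorm g ^ N)) := by gcongr
    _ = C * frobNorm γ ^ (N + |(k : ℝ)|) * frobNorm g ^ (N + 2 * |(k : ℝ)|) := by
        rw [Real.rpow_add hγ, Real.rpow_add hg]
        ring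

/-- If a holomorphic `F : ℍ → ℂ` satisfies `‖F(g·i)‖ ≤ C‖g‖_F^N` whenever `g·i ∈ 𝒮`, then its
weight-`k` slash translate satisfies
`‖(cτ+d)^{-k} F(γ·τ)‖ ≤ C ‖γ‖_F^{N+|k|} ‖g‖_F^{N+2|k|}` for `τ = g·i` with `γ·(g·i) ∈ 𝒮`. -/
theorem slash_moderate_growth (k : ℤ) (hk : Even k) (F : UpperHalfPlane → ℂ)
    (hF : MDifferentiable 𝓘(ℂ) 𝓘(ℂ) F)
    (S : Set UpperHalfPlane) (C N : ℝ) (hC : 0 ≤ C) (hN : 0 ≤ N)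
    (hbound : ∀ g : Matrix.SpecialLinearGroup (Fin 2) ℝ,
      g • UpperHalfPlane.I ∈ S → ‖F (g • UpperHalfPlane.I)‖ ≤ C * frobNorm g ^ N) :
    ∀ γ g : Matrix.SpecialLinearGroup (Fin 2) ℝ, (γ * g) • UpperHalfPlane.I ∈ S →
      ‖(((γ : Matrix (Fin 2) (Fin 2) ℝ) 1 0 : ℂ) * ((g • UpperHalfPlane.I : UpperHalfPlane) : ℂ)
            + ((γ : Matrix (Fin 2) (Fin 2) ℝ) 1 1 : ℂ)) ^ (-k)
          * F (γ • (g • UpperHalfPlane.I))‖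
        ≤ C * frobNorm γ ^ (N + |(k : ℝ)|) * frobNorm g ^ (N + 2 * |(k : ℝ)|) :=
  fun _ _ hS ↦ slash_moderate_growth_general k hN hbound hS
end

section
/- Let a, b, c, d, e be integers with a·d − b·c = 1, b² + d² < a² + c², and e ≠ 0. Then a² + c² < (b + 2ea)² + (d + 2ec)². -/
/-!
For a nonnegative quadratic form `Q`, expanding `0 ≤ Q (u ± v)` bounds the cross term of
`Q (v + t • u)` by `|t| * (Q u + Q v)`. What remains is at least `(|t| - 1) * (|t| * Q u - Q v)`,
which exceeds `Q u` as soon as `2 ≤ |t|` and `Q v < Q u`. The theorem is the case of the sum of two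
squares, with `t = 2 * e`.
-/

section NonnegQuadraticForm

open QuadraticMap

variable {R M : Type*} [CommRing R] [LinearOrder R] [IsStrictOrderedRing R]
  [AddCommGroup M] [Module R M] {Q : QuadraticForm R M}

lemma abs_polar_le_add_of_nonneg (hQ : ∀ x, 0 ≤ Q x) (x y : M) :
    |polar Q x y| ≤ Q x + Q y := by
  have hadd : 0 ≤ Q x + Q y + polar Q x y := by
    simpa only [QuadraticMap.map_add] using hQ (x + y)
  have hsub : 0 ≤ Q x + Q y - polar Q x y := by
    simpa only [QuadraticMap.map_add, Q.map_neg, polar_neg_right, sub_eq_add_neg] using hQ (x - y)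
  exact abs_le.2 ⟨by linarith, by linarith⟩

lemma abs_sub_one_mul_le_map_add_smul (hQ : ∀ x, 0 ≤ Q x) (t : R) (u v : M) :
    (|t| - 1) * (|t| * Q u - Q v) ≤ Q (v + t • u) := by
  have hcross : -(|t| * (Q v + Q u)) ≤ t * polar Q v u :=
    calc -(|t| * (Q v + Q u)) ≤ -(|t| * |polar Q v u|) := by
          gcongr
          exact abs_polar_le_add_of_nonneg hQ v u
      _ = -|t * polar Q v u| := by rw [abs_mul]
      _ ≤ t * polar Q v u := neg_abs_le _
  calc (|t| - 1) * (|t| * Q u - Q v)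
      = Q v + |t| * |t| * Q u - |t| * (Q v + Q u) := by ring
    _ = Q v + t * t * Q u - |t| * (Q v + Q u) := by rw [abs_mul_abs_self]
    _ ≤ Q v + t * t * Q u + t * polar Q v u := by linarith
    _ = Q (v + t • u) := by
      simp only [QuadraticMap.map_add, QuadraticMap.map_smul, polar_smul_right, smul_eq_mul]

lemma map_lt_map_add_smul_of_two_le_abs (hQ : ∀ x, 0 ≤ Q x) {t : R} (ht : 2 ≤ |t|) {u v : M}
    (huv : Q v < Q u) : Q u < Q (v + t • u) := by
  have hscale : 2 * Q u ≤ |t| * Q u := mul_le_mul_of_nonneg_right ht (hQ u)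
  have hpos : Q u < |t| * Q u - Q v := by linarith
  calc Q u < |t| * Q u - Q v := hpos
    _ ≤ (|t| - 1) * (|t| * Q u - Q v) :=
      le_mul_of_one_le_left ((hQ u).trans hpos.le) (by linarith)
    _ ≤ Q (v + t • u) := abs_sub_one_mul_le_map_add_smul hQ t u v

end NonnegQuadraticForm

theorem column_domination_step_general {R : Type*} [CommRing R] [LinearOrder R]
    [IsStrictOrderedRing R] {a b c d t : R} (hcol : b ^ 2 + d ^ 2 < a ^ 2 + c ^ 2)
    (ht : 2 ≤ |t|) : a ^ 2 + c ^ 2 < (b + t * a) ^ 2 + (d + t * c) ^ 2 := by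
  let Q : QuadraticForm R (R × R) := QuadraticMap.sq.prod QuadraticMap.sq
  have hQ (x : R × R) : Q x = x.1 ^ 2 + x.2 ^ 2 := by simp [Q, sq]
  have hnonneg (x : R × R) : 0 ≤ Q x := hQ x ▸ by positivity
  have hlt : Q (b, d) < Q (a, c) := by simpa only [hQ] using hcol
  simpa only [hQ, Prod.smul_mk, Prod.mk_add_mk, smul_eq_mul] using
    map_lt_map_add_smul_of_two_le_abs hnonneg ht hlt

/-- Column-domination inductive step: if `[[a,b],[c,d]] ∈ SL₂(ℤ)` has first column strictly
longer than the second, then right multiplication by a nonzero power `T^{2e}` of `T²` makes the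
second column strictly longer than the first. -/
theorem column_domination_step (a b c d e : ℤ) (hdet : a * d - b * c = 1)
    (hcol : b ^ 2 + d ^ 2 < a ^ 2 + c ^ 2) (he : e ≠ 0) :
    a ^ 2 + c ^ 2 < (b + 2 * e * a) ^ 2 + (d + 2 * e * c) ^ 2 :=
  column_domination_step_general hcol (by simpa [abs_mul] using Int.one_le_abs he)
end

section
/- For v ∈ R = ℂ[G], there exists w ∈ R satisfying (T − 1)·v = (S + 1)·w if and only if there exists r ∈ R with v = (y² − y + 1)·(x + 1)·r, where x = S and y = S·T. That is, {v ∈ R : (T−1)·v ∈ (S+1)·R} is exactly the right ideal (y² − y + 1)(x + 1)·R. -/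
open scoped MatrixGroups

/-- `PSL₂(ℤ)`: the quotient of `SL₂(ℤ)` by its center `{±I}`. -/
abbrev PSL2Z : Type :=
  Matrix.SpecialLinearGroup (Fin 2) ℤ ⧸ Subgroup.center (Matrix.SpecialLinearGroup (Fin 2) ℤ)

/-- The image of `T = [[1,1],[0,1]]` in `PSL₂(ℤ)`. -/
def Tg : PSL2Z := QuotientGroup.mk ModularGroup.T

/-- The image of `S = [[0,-1],[1,0]]` in `PSL₂(ℤ)`. -/
def Sg : PSL2Z := QuotientGroup.mk ModularGroup.S

/-- The element `x = S` of `PSL₂(ℤ)`. -/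
def xg : PSL2Z := Sg

/-- The element `y = S·T` of `PSL₂(ℤ)`. -/
def yg : PSL2Z := Sg * Tg

/-- The embedding of the group `PSL₂(ℤ)` into its complex group algebra. -/
noncomputable def ofG : PSL2Z → MonoidAlgebra ℂ PSL2Z := MonoidAlgebra.of ℂ PSL2Z

/-!
In a noncommutative ring `a ∣ b` means `b ∈ aR`, so both sides of the equivalence are divisibility
statements. As `xy - 1 = (x + 1)y - (y + 1)`, the left one says `x + 1 ∣ (y + 1)v`. Now
`(y + 1)(y² - y + 1) = y³ + 1 = 2`, so `y + 1` is invertible with inverse `(y² - y + 1)/2`, which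
can be moved across the divisibility.
-/

theorem dvd_mul_iff_mul_dvd_of_mul_eq_unit {M : Type*} [Monoid M] {p q u d : M} (hu : IsUnit u)
    (hpq : p * q = u) (hqp : q * p = u) (hud : Commute u d) (v : M) :
    d ∣ q * v ↔ p * d ∣ v := by
  have hq : IsLeftRegular q := .of_mul (a := p) (hpq ▸ hu.isRegular.left)
  calc
    d ∣ q * v ↔ d * u ∣ q * v := hu.mul_right_dvd.symm
    _ ↔ q * (p * d) ∣ q * v := by rw [← mul_assoc, hqp, hud.eq]
    _ ↔ p * d ∣ v := hq.dvd_cancel_left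

theorem isUnit_two_of_algebra (k : Type*) {A : Type*} [Semifield k] [NeZero (2 : k)] [Semiring A]
    [Algebra k A] : IsUnit (2 : A) := by
  simpa only [map_ofNat] using (IsUnit.mk0 (2 : k) two_ne_zero).map (algebraMap k A)

section Ring

variable {R : Type*} [Ring R]

theorem add_one_dvd_mul_sub_one_mul_iff (x y v : R) :
    x + 1 ∣ (x * y - 1) * v ↔ x + 1 ∣ (y + 1) * v := by
  have split : (x * y - 1) * v = (x + 1) * (y * v) - (y + 1) * v := by noncomm_ring
  rw [split, dvd_sub_right (dvd_mul_right _ _)]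

theorem sq_sub_self_add_one_mul_add_one {y : R} (hy : y ^ 3 = 1) :
    (y ^ 2 - y + 1) * (y + 1) = 2 :=
  calc
    (y ^ 2 - y + 1) * (y + 1) = y ^ 3 + 1 := by noncomm_ring
    _ = 2 := by rw [hy, one_add_one_eq_two]

theorem add_one_mul_sq_sub_self_add_one {y : R} (hy : y ^ 3 = 1) :
    (y + 1) * (y ^ 2 - y + 1) = 2 :=
  calc
    (y + 1) * (y ^ 2 - y + 1) = y ^ 3 + 1 := by noncomm_ring
    _ = 2 := by rw [hy, one_add_one_eq_two]

theorem T_sub_one_eq_S_add_one_iff_general (h2 : IsUnit (2 : R)) {y : R} (hy : y ^ 3 = 1)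
    (x v : R) :
    (∃ w : R, (x * y - 1) * v = (x + 1) * w) ↔
    (∃ r : R, v = (y ^ 2 - y + 1) * (x + 1) * r) :=
  calc
    x + 1 ∣ (x * y - 1) * v ↔ x + 1 ∣ (y + 1) * v := add_one_dvd_mul_sub_one_mul_iff x y v
    _ ↔ (y ^ 2 - y + 1) * (x + 1) ∣ v :=
      dvd_mul_iff_mul_dvd_of_mul_eq_unit h2 (sq_sub_self_add_one_mul_add_one hy)
        (add_one_mul_sq_sub_self_add_one hy) (Commute.ofNat_left 2 (x + 1)) v

end Ring

theorem neg_one_mem_center {G : Type*} [Group G] [HasDistribNeg G] :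
    (-1 : G) ∈ Subgroup.center G :=
  Subgroup.mem_center_iff.mpr fun g ↦ (Commute.neg_one_right g).eq

theorem PSL2Z.mk_neg_one : (QuotientGroup.mk (-1 : SL(2, ℤ)) : PSL2Z) = 1 :=
  (QuotientGroup.eq_one_iff _).mpr neg_one_mem_center

theorem Sg_mul_Sg : Sg * Sg = 1 := by
  have S_mul_S : ModularGroup.S * ModularGroup.S = -1 := by decide
  rw [Sg, ← QuotientGroup.mk_mul, S_mul_S, PSL2Z.mk_neg_one]

theorem yg_pow_three : yg ^ 3 = 1 := by
  have ST_pow_three : (ModularGroup.S * ModularGroup.T) ^ 3 = -1 := by decide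
  rw [yg, Sg, Tg, ← QuotientGroup.mk_mul, ← QuotientGroup.mk_pow, ST_pow_three, PSL2Z.mk_neg_one]

theorem Tg_eq_Sg_mul_yg : Tg = Sg * yg := by
  rw [yg, ← mul_assoc, Sg_mul_Sg, one_mul]

theorem ofG_Tg : ofG Tg = ofG Sg * ofG yg := by
  rw [Tg_eq_Sg_mul_yg]
  exact map_mul (MonoidAlgebra.of ℂ PSL2Z) Sg yg

theorem ofG_yg_pow_three : ofG yg ^ 3 = 1 := by
  rw [ofG, ← map_pow, yg_pow_three, map_one]

/-- In `R = ℂ[PSL₂(ℤ)]` with `x = S`, `y = ST`: there exists `w` with `(T-1)v = (S+1)w`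
iff `v` lies in the right ideal `(y² - y + 1)(x + 1)·R`. -/
theorem T_sub_one_eq_S_add_one_iff (v : MonoidAlgebra ℂ PSL2Z) :
    (∃ w : MonoidAlgebra ℂ PSL2Z, (ofG Tg - 1) * v = (ofG Sg + 1) * w) ↔
    (∃ r : MonoidAlgebra ℂ PSL2Z,
      v = (ofG yg ^ 2 - ofG yg + 1) * (ofG xg + 1) * r) := by
  rw [ofG_Tg]
  exact T_sub_one_eq_S_add_one_iff_general (isUnit_two_of_algebra ℂ) ofG_yg_pow_three (ofG Sg) v
end

section
/- Let I be the right ideal of R = ℂ[G] consisting of all elements of the form (T − 1)²·r + S·(T − 1)²·r′ with r, r′ ∈ R. Then for every w ∈ R there exists a unique tuple (c₁, c₂, c₃, c₄, c₅, c₆) ∈ ℂ⁶ such that w − (c₁·1 + c₂·T + c₃·T·S + c₄·S + c₅·S·T + c₆·S·T·S) ∈ I. In particular, R/I is a six-dimensional complex vector space with basis the images of 1, T, TS, S, ST, STS. -/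
open scoped MatrixGroups

/-
Write `s` and `t` for the images of `S` and `T` in `k[G]` and `b` for the family
`1, t, ts, s, st, sts`, indexed from 0.

Spanning: the relations `s² = (st)³ = 1` express `bᵢ s` and, modulo the right ideal `I`, also
`bᵢ t` as linear combinations of the `bⱼ`, with coefficients in integer matrices `M_S` and `M_T`.
Since `s` and `t` generate `k[G]` as an algebra, combinations of the `bⱼ` are stable modulo `I`
under right multiplication by every `w`; apply this to `b₀ = 1`.

Independence: `M_S² = (M_S M_T)³ = 1`. By ping-pong, `G` is the free product of the subgroups
generated by `S` and `ST`, of orders 2 and 3, so `S ↦ M_S`, `T ↦ M_T` extends to an algebra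
homomorphism `F` from `k[G]` to 6 × 6 matrices. Row 0 of `F` vanishes on `I` and sends `bᵢ` to the
`i`-th unit vector, so it reads off the coefficients.
-/

theorem adjoin_image_monoidAlgebraOf_eq_top (k : Type*) {M : Type*} [CommSemiring k] [Monoid M]
    {s : Set M} (hs : Submonoid.closure s = ⊤) :
    Algebra.adjoin k (MonoidAlgebra.of k M '' s) = ⊤ := by
  rw [Set.image_eq_range, Algebra.adjoin_range_eq_range_freeAlgebra_lift, AlgHom.range_eq_top]
  exact MonoidAlgebra.freeAlgebra_lift_of_surjective_of_closure hs

section PingPong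

open scoped Pointwise Function

/-- The homomorphism out of the cyclic group of order `n` determined by an element `g` with
`g ^ n = 1`. The target is only a monoid, so that it can be the multiplicative monoid of a ring. -/
def zmodPowHom {M : Type*} [Monoid M] (n : ℕ) [NeZero n] (g : M) (hg : g ^ n = 1) :
    Multiplicative (ZMod n) →* M where
  toFun a := g ^ a.toAdd.val
  map_one' := by simp
  map_mul' a b := by rw [toAdd_mul, ZMod.val_add, ← pow_add, ← pow_eq_pow_mod _ hg]

theorem zmodPowHom_ofAdd_one {M : Type*} [Monoid M] (n : ℕ) [NeZero n] (g : M) (hg : g ^ n = 1) :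
    zmodPowHom n g hg (Multiplicative.ofAdd 1) = g := by
  change g ^ (1 : ZMod n).val = g
  rw [ZMod.val_one_eq_one_mod, ← pow_eq_pow_mod _ hg, pow_one]

variable {ι G α : Type*} [Group G] [MulAction G α] {n : ι → ℕ} [∀ i, NeZero (n i)] {g : ι → G}

theorem lift_zmodPowHom_surjective (hg : ∀ i, g i ^ n i = 1)
    (hgen : Subgroup.closure (Set.range g) = ⊤) :
    Function.Surjective (Monoid.CoprodI.lift fun i ↦ zmodPowHom (n i) (g i) (hg i)) := by
  rw [← MonoidHom.range_eq_top, eq_top_iff, ← hgen, Subgroup.closure_le]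
  rintro _ ⟨i, rfl⟩
  exact ⟨.of (Multiplicative.ofAdd (1 : ZMod (n i))), by
    rw [Monoid.CoprodI.lift_of, zmodPowHom_ofAdd_one]⟩

variable [Nontrivial ι] {X : ι → Set α}

theorem lift_zmodPowHom_injective_of_ping_pong (hg : ∀ i, g i ^ n i = 1) (hn : ∃ i, 3 ≤ n i)
    (hX : ∀ i, (X i).Nonempty) (hdisj : Pairwise (Disjoint on X))
    (hpp : Pairwise fun i j ↦ ∀ m, m ≠ 0 → m < n i → g i ^ m • X j ⊆ X i) :
    Function.Injective (Monoid.CoprodI.lift fun i ↦ zmodPowHom (n i) (g i) (hg i)) := by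
  refine Monoid.CoprodI.lift_injective_of_ping_pong _ (.inr ?_) X hX hdisj fun i j hij a ha ↦ ?_
  · obtain ⟨i, hi⟩ := hn
    refine ⟨i, ?_⟩
    rw [Cardinal.mk_congr Multiplicative.toAdd, Cardinal.mk_fintype, ZMod.card]
    exact_mod_cast hi
  · refine hpp hij _ (fun h ↦ ha ?_) (ZMod.val_lt _)
    exact Multiplicative.toAdd.injective ((ZMod.val_eq_zero _).1 h)

theorem exists_monoidHom_of_ping_pong (hg : ∀ i, g i ^ n i = 1) (hn : ∃ i, 3 ≤ n i)
    (hX : ∀ i, (X i).Nonempty) (hdisj : Pairwise (Disjoint on X))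
    (hpp : Pairwise fun i j ↦ ∀ m, m ≠ 0 → m < n i → g i ^ m • X j ⊆ X i)
    (hgen : Subgroup.closure (Set.range g) = ⊤)
    {M : Type*} [Monoid M] {a : ι → M} (ha : ∀ i, a i ^ n i = 1) :
    ∃ f : G →* M, ∀ i, f (g i) = a i := by
  let e := MulEquiv.ofBijective _ ⟨lift_zmodPowHom_injective_of_ping_pong hg hn hX hdisj hpp,
    lift_zmodPowHom_surjective hg hgen⟩
  refine ⟨(Monoid.CoprodI.lift fun i ↦ zmodPowHom (n i) (a i) (ha i)).comp e.symm.toMonoidHom,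
    fun i ↦ ?_⟩
  have he : e (.of (i := i) (Multiplicative.ofAdd 1)) = g i :=
    (Monoid.CoprodI.lift_of _ _).trans (zmodPowHom_ofAdd_one _ _ (hg i))
  rw [← he, MonoidHom.comp_apply, MulEquiv.toMonoidHom_eq_coe, MonoidHom.coe_coe,
    MulEquiv.symm_apply_apply, Monoid.CoprodI.lift_of, zmodPowHom_ofAdd_one]

end PingPong

theorem mem_center_specialLinearGroup_fin_two_iff {R : Type*} [CommRing R] [NoZeroDivisors R]
    {A : Matrix.SpecialLinearGroup (Fin 2) R} :
    A ∈ Subgroup.center (Matrix.SpecialLinearGroup (Fin 2) R) ↔ A = 1 ∨ A = -1 := by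
  rw [Matrix.SpecialLinearGroup.mem_center_iff, Fintype.card_fin]
  constructor
  · rintro ⟨r, hr, hA⟩
    obtain rfl | rfl := mul_self_eq_one_iff.1 ((sq r).symm.trans hr)
    · exact .inl (Subtype.ext (by simpa using hA.symm))
    · exact .inr (Subtype.ext (by rw [← hA, map_neg, map_one]; rfl))
  · rintro (rfl | rfl)
    · exact ⟨1, by simp⟩
    · exact ⟨-1, by simp, by rw [map_neg, map_one]; rfl⟩

namespace PSL2Z

theorem mk_neg (A : Matrix.SpecialLinearGroup (Fin 2) ℤ) :
    (QuotientGroup.mk (-A) : PSL2Z) = QuotientGroup.mk A := by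
  rw [QuotientGroup.eq, mem_center_specialLinearGroup_fin_two_iff]
  right
  simp

theorem xg_sq : xg ^ 2 = 1 := by
  have hS : ModularGroup.S ^ 2 = -1 := by decide
  rw [xg, Sg, ← QuotientGroup.mk_pow, hS, mk_neg, QuotientGroup.mk_one]

theorem yg_pow_three : yg ^ 3 = 1 := by
  have hST : (ModularGroup.S * ModularGroup.T) ^ 3 = -1 := by decide
  rw [yg, Sg, Tg, ← QuotientGroup.mk_mul, ← QuotientGroup.mk_pow, hST, mk_neg,
    QuotientGroup.mk_one]

theorem closure_Sg_Tg : Subgroup.closure {Sg, Tg} = ⊤ := by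
  have h := congrArg (Subgroup.map (QuotientGroup.mk' (Subgroup.center _)))
    SpecialLinearGroup.SL2Z_generators
  rwa [MonoidHom.map_closure, Set.image_pair, ← MonoidHom.range_eq_map,
    MonoidHom.range_eq_top.2 (QuotientGroup.mk'_surjective _)] at h

theorem closure_xg_yg : Subgroup.closure {xg, yg} = ⊤ := by
  have hx : xg ∈ Subgroup.closure {xg, yg} := Subgroup.subset_closure (by simp)
  have hy : yg ∈ Subgroup.closure {xg, yg} := Subgroup.subset_closure (by simp)
  have hT : Tg = xg⁻¹ * yg := by rw [yg, xg, inv_mul_cancel_left]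
  rw [eq_top_iff, ← closure_Sg_Tg, Subgroup.closure_le, Set.pair_subset_iff]
  exact ⟨hx, hT ▸ mul_mem (inv_mem hx) hy⟩

/-- The product of the two entries of the first column of a matrix representing `g`. Its sign is
that of the point `g • ∞` of the projective line, on which the modular group plays ping-pong. -/
def columnProd (g : PSL2Z) : ℤ :=
  Quotient.liftOn' g (fun A ↦ A 0 0 * A 1 0) fun A B h ↦ by
    rw [QuotientGroup.leftRel_apply, mem_center_specialLinearGroup_fin_two_iff] at h
    obtain h | h := h
    · rw [inv_mul_eq_one.1 h]
    · simp [inv_mul_eq_iff_eq_mul.1 h]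

theorem columnProd_mk (A : Matrix.SpecialLinearGroup (Fin 2) ℤ) :
    columnProd (QuotientGroup.mk A) = A 0 0 * A 1 0 := rfl

theorem columnProd_mk_mul_mk (A B : Matrix.SpecialLinearGroup (Fin 2) ℤ) :
    columnProd (QuotientGroup.mk A * QuotientGroup.mk B) =
      (A 0 0 * B 0 0 + A 0 1 * B 1 0) * (A 1 0 * B 0 0 + A 1 1 * B 1 0) := by
  change (A * B) 0 0 * (A * B) 1 0 = _
  simp only [Matrix.SpecialLinearGroup.coe_mul, Matrix.mul_apply, Fin.sum_univ_two]

theorem columnProd_xg_mul (g : PSL2Z) : columnProd (xg * g) = -columnProd g := by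
  obtain ⟨A, rfl⟩ := QuotientGroup.mk_surjective g
  rw [xg, Sg, columnProd_mk_mul_mk, columnProd_mk, ModularGroup.coe_S]
  simp [mul_comm]

theorem columnProd_yg_mul_le (g : PSL2Z) : columnProd (yg * g) ≤ -columnProd g := by
  obtain ⟨A, rfl⟩ := QuotientGroup.mk_surjective g
  have hY : ((ModularGroup.S * ModularGroup.T : Matrix.SpecialLinearGroup (Fin 2) ℤ) :
      Matrix (Fin 2) (Fin 2) ℤ) = !![0, -1; 1, 1] := by decide
  rw [yg, Sg, Tg, ← QuotientGroup.mk_mul, columnProd_mk_mul_mk, columnProd_mk, hY]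
  simp only [Matrix.of_apply, Matrix.cons_val', Matrix.cons_val_zero, Matrix.cons_val_one,
    Matrix.cons_val_fin_one]
  nlinarith [sq_nonneg (A 1 0)]

theorem columnProd_yg_sq_mul_le (g : PSL2Z) : columnProd (yg ^ 2 * g) ≤ -columnProd g := by
  obtain ⟨A, rfl⟩ := QuotientGroup.mk_surjective g
  have hY : (((ModularGroup.S * ModularGroup.T) ^ 2 : Matrix.SpecialLinearGroup (Fin 2) ℤ) :
      Matrix (Fin 2) (Fin 2) ℤ) = !![-1, -1; 1, 0] := by decide
  rw [yg, Sg, Tg, ← QuotientGroup.mk_mul, ← QuotientGroup.mk_pow, columnProd_mk_mul_mk,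
    columnProd_mk, hY]
  simp only [Matrix.of_apply, Matrix.cons_val', Matrix.cons_val_zero, Matrix.cons_val_one,
    Matrix.cons_val_fin_one]
  nlinarith [sq_nonneg (A 0 0)]

/-- The generators `x` and `y` of the two free factors of the modular group, indexed by `Bool`. -/
def factorGen : Bool → PSL2Z
  | false => xg
  | true => yg

/-- The orders of the generators of the two free factors of the modular group. -/
def factorOrder : Bool → ℕ
  | false => 2
  | true => 3

instance (i : Bool) : NeZero (factorOrder i) := by
  cases i <;> exact ⟨by decide⟩

/-- The ping-pong sets of the two free factors. -/
def pingPongSet : Bool → Set PSL2Z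
  | false => {g | 0 < columnProd g}
  | true => {g | columnProd g < 0}

theorem factorGen_pow_factorOrder : ∀ i, factorGen i ^ factorOrder i = 1
  | false => xg_sq
  | true => yg_pow_three

theorem range_factorGen : Set.range factorGen = {xg, yg} := by
  ext; simp [factorGen]

theorem pingPongSet_nonempty (i : Bool) : (pingPongSet i).Nonempty := by
  have h : 0 < columnProd (QuotientGroup.mk (ModularGroup.T * ModularGroup.S)) := by
    decide
  cases i
  · exact ⟨_, h⟩
  · exact ⟨_, (columnProd_yg_mul_le _).trans_lt (neg_neg_of_pos h)⟩

theorem pairwise_disjoint_pingPongSet : Pairwise (Function.onFun Disjoint pingPongSet) := by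
  have h : Disjoint (pingPongSet false) (pingPongSet true) :=
    Set.disjoint_left.2 fun g (hpos : 0 < columnProd g) ↦ hpos.not_gt
  rintro (_ | _) (_ | _) hij
  exacts [absurd rfl hij, h, h.symm, absurd rfl hij]

open scoped Pointwise in
theorem factorGen_pow_smul_pingPongSet_subset : Pairwise fun i j ↦
    ∀ m, m ≠ 0 → m < factorOrder i → factorGen i ^ m • pingPongSet j ⊆ pingPongSet i := by
  rintro (_ | _) (_ | _) hij m hm0 hm
  any_goals exact absurd rfl hij
  all_goals rintro _ ⟨g, hg, rfl⟩
  · obtain rfl : m = 1 := by simp only [factorOrder] at hm; omega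
    change 0 < columnProd (xg ^ 1 * g)
    rw [pow_one, columnProd_xg_mul]
    exact neg_pos.2 hg
  · change columnProd (yg ^ m * g) < 0
    obtain rfl | rfl : m = 1 ∨ m = 2 := by simp only [factorOrder] at hm; omega
    · rw [pow_one]
      exact (columnProd_yg_mul_le g).trans_lt (neg_neg_of_pos hg)
    · exact (columnProd_yg_sq_mul_le g).trans_lt (neg_neg_of_pos hg)

theorem exists_monoidHom {M : Type*} [Monoid M] {s t : M} (hs : s * s = 1)
    (hst : (s * t) ^ 3 = 1) : ∃ f : PSL2Z →* M, f Sg = s ∧ f Tg = t := by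
  let a : Bool → M
    | false => s
    | true => s * t
  have ha : ∀ i, a i ^ factorOrder i = 1
    | false => (sq s).trans hs
    | true => hst
  obtain ⟨f, hf⟩ := exists_monoidHom_of_ping_pong factorGen_pow_factorOrder ⟨true, le_rfl⟩
    pingPongSet_nonempty pairwise_disjoint_pingPongSet factorGen_pow_smul_pingPongSet_subset
    (range_factorGen ▸ closure_xg_yg) ha
  have hfS : f Sg = s := hf false
  have hfY : f (Sg * Tg) = s * t := hf true
  refine ⟨f, hfS, ?_⟩
  calc f Tg = s * s * f Tg := by rw [hs, one_mul]
    _ = s * f (Sg * Tg) := by rw [map_mul, hfS, mul_assoc]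
    _ = t := by rw [hfY, ← mul_assoc, hs, one_mul]

theorem submonoidClosure_xg_yg : Submonoid.closure {xg, yg} = ⊤ := by
  have hfin : ∀ x ∈ ({xg, yg} : Set PSL2Z), IsOfFinOrder x := by
    rintro _ (rfl | rfl)
    · exact isOfFinOrder_iff_pow_eq_one.2 ⟨2, two_pos, xg_sq⟩
    · exact isOfFinOrder_iff_pow_eq_one.2 ⟨3, three_pos, yg_pow_three⟩
  rw [← Subgroup.closure_toSubmonoid_of_isOfFinOrder hfin, closure_xg_yg, Subgroup.top_toSubmonoid]

theorem adjoin_of_Sg_of_Tg (k : Type*) [CommSemiring k] :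
    Algebra.adjoin k {MonoidAlgebra.of k PSL2Z Sg, MonoidAlgebra.of k PSL2Z Tg} = ⊤ := by
  rw [eq_top_iff, ← adjoin_image_monoidAlgebraOf_eq_top k submonoidClosure_xg_yg, Set.image_pair,
    Algebra.adjoin_le_iff, Set.pair_subset_iff, xg, yg, map_mul]
  obtain ⟨hS, hT⟩ := Set.pair_subset_iff.1 (Algebra.subset_adjoin (R := k)
    (s := {MonoidAlgebra.of k PSL2Z Sg, MonoidAlgebra.of k PSL2Z Tg}))
  exact ⟨hS, mul_mem hS hT⟩

end PSL2Z

section RightIdeal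

open scoped Matrix

theorem mem_span_mulOpposite_pair {A : Type*} [Semiring A] {a b z : A} :
    z ∈ Submodule.span Aᵐᵒᵖ {a, b} ↔ ∃ r r', a * r + b * r' = z := by
  simp only [Submodule.mem_span_pair, MulOpposite.op_surjective.exists, op_smul_eq_mul]

variable {ι : Type*} [Fintype ι] [DecidableEq ι]

theorem vecMul_eq_zero_of_mem_span {R A 𝓕 : Type*} [Semiring R] [Semiring A]
    [FunLike 𝓕 A (Matrix ι ι R)] [RingHomClass 𝓕 A (Matrix ι ι R)] {F : 𝓕} {e : ι → R} {s : Set A}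
    (hs : ∀ a ∈ s, e ᵥ* F a = 0) {a : A} (ha : a ∈ Submodule.span Aᵐᵒᵖ s) : e ᵥ* F a = 0 := by
  induction ha using Submodule.span_induction with
  | mem a ha => exact hs a ha
  | zero => rw [map_zero, Matrix.vecMul_zero]
  | add a b _ _ iha ihb => rw [map_add, Matrix.vecMul_add, iha, ihb, add_zero]
  | smul r a _ iha =>
    rw [MulOpposite.smul_eq_mul_unop, map_mul, ← Matrix.vecMul_vecMul, iha, Matrix.zero_vecMul]

theorem vecMul_linearCombination {R V 𝓕 : Type*} [CommSemiring R] [AddCommMonoid V] [Module R V]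
    [FunLike 𝓕 V (Matrix ι ι R)] [LinearMapClass 𝓕 R V (Matrix ι ι R)] {F : 𝓕} {b : ι → V}
    {e : ι → R} (hb : ∀ i, e ᵥ* F (b i) = Pi.single i 1) (c : ι → R) :
    e ᵥ* F (Fintype.linearCombination R b c) = c := by
  simp only [Fintype.linearCombination_apply, map_sum, map_smul, Matrix.vecMul_sum,
    Matrix.vecMul_smul, hb]
  exact (pi_eq_sum_univ' c).symm

theorem linearCombination_mul_modEq {k A : Type*} [CommSemiring k] [Ring A] [Algebra k A]
    {I : Submodule Aᵐᵒᵖ A} {b : ι → A} {F : A →ₐ[k] Matrix ι ι k} {s : Set A}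
    (hs : ∀ x ∈ s, ∀ i, b i * x ≡ Fintype.linearCombination k b ((F x).row i) [SMOD I])
    {x : A} (hx : x ∈ Algebra.adjoin k s) (c : ι → k) :
    Fintype.linearCombination k b c * x ≡ Fintype.linearCombination k b (c ᵥ* F x) [SMOD I] := by
  induction hx using Algebra.adjoin_induction generalizing c with
  | mem x hx =>
    rw [Matrix.vecMul_eq_sum, map_sum, Fintype.linearCombination_apply, Finset.sum_mul]
    refine SModEq.sum fun i _ ↦ ?_
    rw [map_smul, smul_mul_assoc, SModEq.sub_mem, ← smul_sub]
    exact I.smul_of_tower_mem (c i) (SModEq.sub_mem.1 (hs x hx i))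
  | algebraMap r =>
    rw [← Algebra.commutes, ← Algebra.smul_def, AlgHom.commutes, Algebra.algebraMap_eq_smul_one,
      Matrix.vecMul_smul, Matrix.vecMul_one, map_smul]
  | add x y _ _ ihx ihy =>
    rw [mul_add, map_add, Matrix.vecMul_add, map_add]
    exact (ihx c).add (ihy c)
  | mul x y _ _ ihx ihy =>
    rw [← mul_assoc, map_mul, ← Matrix.vecMul_vecMul]
    exact ((ihx c).smul (MulOpposite.op y)).trans (ihy _)

theorem existsUnique_sub_linearCombination_mem {k A : Type*} [CommRing k] [Ring A] [Algebra k A]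
    {I : Submodule Aᵐᵒᵖ A} {b : ι → A} {F : A →ₐ[k] Matrix ι ι k} {s : Set A}
    (hgen : Algebra.adjoin k s = ⊤)
    (hs : ∀ x ∈ s, ∀ i, b i * x ≡ Fintype.linearCombination k b ((F x).row i) [SMOD I])
    {e : ι → k} (he : Fintype.linearCombination k b e = 1)
    (hb : ∀ i, e ᵥ* F (b i) = Pi.single i 1)
    (hI : ∀ a ∈ I, e ᵥ* F a = 0) (w : A) :
    ∃! c : ι → k, w - Fintype.linearCombination k b c ∈ I := by
  refine ⟨e ᵥ* F w, ?_, fun c hc ↦ ?_⟩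
  · have h := linearCombination_mul_modEq hs (hgen ▸ Algebra.mem_top : w ∈ _) e
    rw [he, one_mul] at h
    exact SModEq.sub_mem.1 h
  · have h := hI _ hc
    rw [map_sub, Matrix.vecMul_sub, vecMul_linearCombination hb, sub_eq_zero] at h
    exact h.symm

end RightIdeal

section SixFamily

open scoped Matrix

/-- The six elements `1, T, TS, S, ST, STS`, for arbitrary elements `s` and `t` of a monoid. -/
def sixFamily {M : Type*} [Monoid M] (s t : M) : Fin 6 → M :=
  ![1, t, t * s, s, s * t, s * t * s]

theorem map_sixFamily {M N F : Type*} [Monoid M] [Monoid N] [FunLike F M N] [MonoidHomClass F M N]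
    (f : F) (s t : M) (i : Fin 6) : f (sixFamily s t i) = sixFamily (f s) (f t) i := by
  fin_cases i <;> simp [sixFamily]

theorem sub_linearCombination_sixFamily_mem_iff {k A : Type*} [CommRing k] [Ring A] [Algebra k A]
    {s t a b w : A} {c : Fin 6 → k} :
    w - Fintype.linearCombination k (sixFamily s t) c ∈ Submodule.span Aᵐᵒᵖ {a, b} ↔
      ∃ r r', w - (c 0 • 1 + c 1 • t + c 2 • (t * s) + c 3 • s + c 4 • (s * t) +
        c 5 • (s * t * s)) = a * r + b * r' := by
  rw [mem_span_mulOpposite_pair, Fintype.linearCombination_apply, Fin.sum_univ_six]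
  simp only [eq_comm]
  rfl

theorem mul_stst_eq {M : Type*} [Monoid M] {s t : M} (hs : s * s = 1) (hst : (s * t) ^ 3 = 1) :
    t * (s * t * s * t) = s :=
  calc t * (s * t * s * t)
    _ = s * s * (t * (s * t * s * t)) := by rw [hs, one_mul]
    _ = s * (s * t) ^ 3 := by simp only [pow_succ, pow_zero, one_mul, mul_assoc]
    _ = s := by rw [hst, mul_one]

/-- The matrix of right multiplication by `s` on `sixFamily s t` when `s * s = 1`: row `i` holds the
coordinates of `sixFamily s t i * s`. -/
def rightMulS : Matrix (Fin 6) (Fin 6) ℤ :=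
  !![0, 0, 0, 1, 0, 0;
     0, 0, 1, 0, 0, 0;
     0, 1, 0, 0, 0, 0;
     1, 0, 0, 0, 0, 0;
     0, 0, 0, 0, 0, 1;
     0, 0, 0, 0, 1, 0]

/-- The matrix of right multiplication by `t` on `sixFamily s t` when `s * s = (s * t) ^ 3 = 1`,
modulo the right ideal generated by `(t - 1) ^ 2` and `s * (t - 1) ^ 2`: row `i` holds the
coordinates of `sixFamily s t i * t`. -/
def rightMulT : Matrix (Fin 6) (Fin 6) ℤ :=
  !![0, 1, 0, 0, 0, 0;
     -1, 2, 0, 0, 0, 0;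
     2, 0, 0, 0, 0, -1;
     0, 0, 0, 0, 1, 0;
     0, 0, 0, -1, 2, 0;
     0, 0, -1, 2, 0, 0]

theorem rightMulS_mul_self : rightMulS * rightMulS = 1 := by decide

theorem rightMulS_mul_rightMulT_pow_three : (rightMulS * rightMulT) ^ 3 = 1 := by decide

theorem row_zero_sixFamily_rightMul (i : Fin 6) :
    (sixFamily rightMulS rightMulT i).row 0 = Pi.single i 1 := by
  revert i; decide

theorem row_zero_rightMulT_sub_one_sq : ((rightMulT - 1) ^ 2).row 0 = 0 := by decide

theorem row_zero_rightMulS_mul_rightMulT_sub_one_sq :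
    (rightMulS * (rightMulT - 1) ^ 2).row 0 = 0 := by decide

variable {k A : Type*} [CommRing k] [Ring A] [Algebra k A] {s t : A}

theorem sixFamily_mul_s (hs : s * s = 1) (i : Fin 6) :
    sixFamily s t i * s = Fintype.linearCombination k (sixFamily s t)
      (((Int.castRingHom k).mapMatrix rightMulS).row i) := by
  fin_cases i <;>
    simp [Fintype.linearCombination_apply, Fin.sum_univ_six, sixFamily, rightMulS, mul_assoc, hs]

theorem sub_one_sq_mul_stst_eq (hs : s * s = 1) (hst : (s * t) ^ 3 = 1) :
    (t - 1) ^ 2 * (s * t * s * t) = s * t * s * t - (-(t * s) + 2 * s) :=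
  calc (t - 1) ^ 2 * (s * t * s * t)
    _ = t * (t * (s * t * s * t)) - 2 * (t * (s * t * s * t)) + s * t * s * t := by noncomm_ring
    _ = s * t * s * t - (-(t * s) + 2 * s) := by rw [mul_stst_eq hs hst]; abel

theorem mul_sub_one_sq_mul_stst_eq (hs : s * s = 1) (hst : (s * t) ^ 3 = 1) :
    s * (t - 1) ^ 2 * (s * t * s * t) = t * s * t - (2 - s * t * s) :=
  calc s * (t - 1) ^ 2 * (s * t * s * t)
    _ = s * (s * t * s * t - (-(t * s) + 2 * s)) := by
      rw [mul_assoc, sub_one_sq_mul_stst_eq hs hst]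
    _ = s * s * (t * s * t) - (2 * (s * s) - s * t * s) := by noncomm_ring
    _ = t * s * t - (2 - s * t * s) := by rw [hs, one_mul, mul_one]

theorem linearCombination_rightMulT (i : Fin 6) :
    Fintype.linearCombination k (sixFamily s t)
        (((Int.castRingHom k).mapMatrix rightMulT).row i) =
      (![t, -1 + 2 * t, 2 - s * t * s, s * t, -s + 2 * (s * t), -(t * s) + 2 * s] :
        Fin 6 → A) i := by
  fin_cases i <;>
    simp [Fintype.linearCombination_apply, Fin.sum_univ_six, sixFamily, rightMulT, two_mul,
      two_smul, one_add_one_eq_two, sub_eq_add_neg]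

theorem sixFamily_mul_t_modEq (hs : s * s = 1) (hst : (s * t) ^ 3 = 1) (i : Fin 6) :
    sixFamily s t i * t ≡ Fintype.linearCombination k (sixFamily s t)
      (((Int.castRingHom k).mapMatrix rightMulT).row i)
      [SMOD Submodule.span Aᵐᵒᵖ {(t - 1) ^ 2, s * (t - 1) ^ 2}] := by
  rw [SModEq.sub_mem, mem_span_mulOpposite_pair, linearCombination_rightMulT]
  match i with
  | 0 => exact ⟨0, 0, show _ = 1 * t - t by noncomm_ring⟩
  | 1 => exact ⟨1, 0, show _ = t * t - (-1 + 2 * t) by noncomm_ring⟩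
  | 2 => exact ⟨0, s * t * s * t, by
      rw [mul_zero, zero_add]; exact mul_sub_one_sq_mul_stst_eq hs hst⟩
  | 3 => exact ⟨0, 0, show _ = s * t - s * t by noncomm_ring⟩
  | 4 => exact ⟨0, 1, show _ = s * t * t - (-s + 2 * (s * t)) by noncomm_ring⟩
  | 5 => exact ⟨s * t * s * t, 0, by
      rw [mul_zero, add_zero]; exact sub_one_sq_mul_stst_eq hs hst⟩

theorem single_one_vecMul_mapMatrix {m R S : Type*} [Fintype m] [DecidableEq m]
    [NonAssocSemiring R] [NonAssocSemiring S] (f : R →+* S) (i : m) (M : Matrix m m R) :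
    Pi.single i 1 ᵥ* f.mapMatrix M = f ∘ M.row i := by
  rw [Matrix.single_one_vecMul]; rfl

theorem existsUnique_sub_linearCombination_sixFamily_mem (hs : s * s = 1) (hst : (s * t) ^ 3 = 1)
    (hgen : Algebra.adjoin k {s, t} = ⊤) {F : A →ₐ[k] Matrix (Fin 6) (Fin 6) k}
    (hFs : F s = (Int.castRingHom k).mapMatrix rightMulS)
    (hFt : F t = (Int.castRingHom k).mapMatrix rightMulT) (w : A) :
    ∃! c : Fin 6 → k, w - Fintype.linearCombination k (sixFamily s t) c ∈
      Submodule.span Aᵐᵒᵖ {(t - 1) ^ 2, s * (t - 1) ^ 2} := by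
  refine existsUnique_sub_linearCombination_mem (F := F) (e := Pi.single 0 1) hgen ?_ ?_ ?_ ?_ w
  · rintro _ (rfl | rfl) i
    · rw [hFs, sixFamily_mul_s (k := k) hs]
    · rw [hFt]
      exact sixFamily_mul_t_modEq hs hst i
  · rw [Fintype.linearCombination_apply_single, one_smul]
    rfl
  · intro i
    rw [map_sixFamily, hFs, hFt, ← map_sixFamily, single_one_vecMul_mapMatrix,
      row_zero_sixFamily_rightMul]
    ext j
    simp [Pi.single_apply]
  · refine fun a ↦ vecMul_eq_zero_of_mem_span ?_
    rintro _ (rfl | rfl)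
    · have h : F ((t - 1) ^ 2) = (Int.castRingHom k).mapMatrix ((rightMulT - 1) ^ 2) := by
        simp only [map_pow, map_sub, map_one, hFt]
      rw [h, single_one_vecMul_mapMatrix, row_zero_rightMulT_sub_one_sq]
      ext; simp
    · have h : F (s * (t - 1) ^ 2) =
          (Int.castRingHom k).mapMatrix (rightMulS * (rightMulT - 1) ^ 2) := by
        simp only [map_mul, map_pow, map_sub, map_one, hFs, hFt]
      rw [h, single_one_vecMul_mapMatrix, row_zero_rightMulS_mul_rightMulT_sub_one_sq]
      ext; simp

end SixFamily

theorem basis_mod_ideal_general {k : Type*} [CommRing k] (w : MonoidAlgebra k PSL2Z) :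
    ∃! c : Fin 6 → k, ∃ r r' : MonoidAlgebra k PSL2Z,
      w - (c 0 • (1 : MonoidAlgebra k PSL2Z) + c 1 • MonoidAlgebra.of k PSL2Z Tg
          + c 2 • MonoidAlgebra.of k PSL2Z (Tg * Sg) + c 3 • MonoidAlgebra.of k PSL2Z Sg
          + c 4 • MonoidAlgebra.of k PSL2Z (Sg * Tg)
          + c 5 • MonoidAlgebra.of k PSL2Z (Sg * Tg * Sg))
        = (MonoidAlgebra.of k PSL2Z Tg - 1) ^ 2 * r
          + MonoidAlgebra.of k PSL2Z Sg * (MonoidAlgebra.of k PSL2Z Tg - 1) ^ 2 * r' := by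
  obtain ⟨f, hfS, hfT⟩ := PSL2Z.exists_monoidHom
    (s := (Int.castRingHom k).mapMatrix rightMulS) (t := (Int.castRingHom k).mapMatrix rightMulT)
    (by rw [← map_mul, rightMulS_mul_self, map_one])
    (by rw [← map_mul, ← map_pow, rightMulS_mul_rightMulT_pow_three, map_one])
  have hS : MonoidAlgebra.of k PSL2Z Sg * MonoidAlgebra.of k PSL2Z Sg = 1 := by
    rw [← map_mul, ← sq, ← xg, PSL2Z.xg_sq, map_one]
  have hST : (MonoidAlgebra.of k PSL2Z Sg * MonoidAlgebra.of k PSL2Z Tg) ^ 3 = 1 := by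
    rw [← map_mul, ← map_pow, ← yg, PSL2Z.yg_pow_three, map_one]
  have h := existsUnique_sub_linearCombination_sixFamily_mem hS hST (PSL2Z.adjoin_of_Sg_of_Tg k)
    (F := MonoidAlgebra.lift k _ PSL2Z f) ((MonoidAlgebra.lift_of f _).trans hfS)
    ((MonoidAlgebra.lift_of f _).trans hfT) w
  simp only [map_mul]
  simpa only [sub_linearCombination_sixFamily_mem_iff] using h

/-- `R/𝓘` is six-dimensional with basis the images of `I, T, TS, S, ST, STS`, where
`𝓘 = (T-1)²R + S(T-1)²R`: every `w ∈ R = ℂ[PSL₂(ℤ)]` is congruent modulo `𝓘` to a unique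
linear combination of `1, T, TS, S, ST, STS`. -/
theorem basis_mod_ideal (w : MonoidAlgebra ℂ PSL2Z) :
    ∃! c : Fin 6 → ℂ, ∃ r r' : MonoidAlgebra ℂ PSL2Z,
      w - (c 0 • (1 : MonoidAlgebra ℂ PSL2Z) + c 1 • ofG Tg + c 2 • ofG (Tg * Sg)
          + c 3 • ofG Sg + c 4 • ofG (Sg * Tg) + c 5 • ofG (Sg * Tg * Sg))
        = (ofG Tg - 1) ^ 2 * r + ofG Sg * (ofG Tg - 1) ^ 2 * r' :=
  basis_mod_ideal_general w
end
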